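/- arXiv:2505.07756 — 5 statements merged into one kernel-verified Lean document; each statement's English description precedes it below -/
import Mathlib

section
/- Let n ≥ 8. Suppose that every family 𝒢 of 3-element subsets of an (n−1)-element set that shatters no 3-element set satisfies |𝒢| ≤ C(n−2, 2) + 1. Then every family 𝒻 of 3-element subsets of [n] that shatters no 3-element subset satisfies |𝒻| ≤ C(n−1, 2) + 1. -/
/-- A family `𝒻` shatters a set `S` if every subset of `S` is the trace of some member of `𝒻`. -/
def Shatters (𝒻 : Finset (Finset ℕ)) (S : Finset ℕ) : Prop :=
  ∀ T ⊆ S, ∃ F ∈ 𝒻, F ∩ S = T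

/-!
Let `𝒻` be a counterexample on `N` points for which the bound holds on `N - 1` points. Deleting a
point shows that every point has degree at least `N - 1`. Call a pair light if it lies in exactly
one member of `𝒻`, and heavy otherwise. A member of `𝒻` without light pairs has all traces of size
at least two, so, not being shattered, it misses either the trace `{v}` for one of its points `v`,
which means that its other two points cover the link of `v`, or the empty trace, in which case it
meets every member of `𝒻` and is called blocking.

There are at most as many members with a light pair as light pairs. If `{x, y}` covers the link of
`v`, then by the degree bound two points are joined to both `x` and `y` in that link, unless it is
a double broom; a double broom forces so much of the rest of `𝒻` that nearly all remaining members
have a light pair, which contradicts the size of `𝒻`. Hence a link has at most one cover inside a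
member, and the members of the second kind are at most as many as the number `R` of points with a
covered link. A case analysis of how blocking triples intersect leaves at most two of them. Finally
each point is in at least three heavy pairs, and in at least four if its link is covered. Hence
`#𝒻 ≤ (N.choose 2 - (3 * N + R) / 2) + R + 2 ≤ N.choose 2 - N + 2`, as `R ≤ N`, which is less than
the `(N - 1).choose 2 + 2 = N.choose 2 - N + 3` members of a counterexample.
-/

open Finset hiding Shatters

variable {V F G H : Finset ℕ} {𝒻 : Finset (Finset ℕ)} {a b c d p v w x y z : ℕ}

lemma ne_of_triple_mem (h𝒻 : (𝒻 : Set (Finset ℕ)).Sized 3) (e : {a, b, c} ∈ 𝒻) :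
    a ≠ b ∧ a ≠ c ∧ b ≠ c := by
  have := h𝒻 e
  grind

lemma eq_triple (hF : #F = 3) (ha : a ∈ F) (hb : b ∈ F) (hc : c ∈ F)
    (hab : a ≠ b) (hac : a ≠ c) (hbc : b ≠ c) : F = {a, b, c} :=
  (eq_of_subset_of_card_le (by simp [insert_subset_iff, *])
    (by rw [hF, card_eq_three.2 ⟨a, b, c, hab, hac, hbc, rfl⟩])).symm

lemma exists_eq_triple (hF : #F = 3) (ha : a ∈ F) : ∃ b c, F = {a, b, c} := by
  obtain ⟨b, c, -, h⟩ := card_eq_two.1 (show #(F.erase a) = 2 by rw [card_erase_of_mem ha, hF])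
  exact ⟨b, c, by rw [← insert_erase ha, h]⟩

lemma exists_eq_triple_of_pair (hF : #F = 3) (ha : a ∈ F) (hb : b ∈ F) (hab : a ≠ b) :
    ∃ c, F = {a, b, c} := by
  obtain ⟨p, q, rfl⟩ := exists_eq_triple hF ha
  obtain rfl | rfl : b = p ∨ b = q := by grind
  · exact ⟨q, rfl⟩
  · exact ⟨p, by rw [pair_comm]⟩

lemma exists_sdiff_eq_pair {K : Finset ℕ} (hF : #F = 3) (hxF : x ∈ F) (hxK : x ∈ K)
    (hFK : 2 ≤ #(F \ K)) : ∃ z w, F = {x, z, w} ∧ F \ K = {z, w} := by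
  obtain ⟨z, w, rfl⟩ := exists_eq_triple hF hxF
  have hsub : ({x, z, w} : Finset ℕ) \ K ⊆ {z, w} := fun u hu ↦ by grind
  exact ⟨z, w, rfl, eq_of_subset_of_card_le hsub (card_le_two.trans hFK)⟩

lemma card_union_le_seven (hF : #F = 3) (hG : #G = 3) (hH : #H = 3) (hFG : F ∩ G = {p})
    (hFH : F ∩ H = {p}) : #(F ∪ G ∪ H) ≤ 7 := by
  have hunion := card_union_add_card_inter F G
  have hunion' := card_union_add_card_inter (F ∪ G) H
  have hpos : 0 < #((F ∪ G) ∩ H) :=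
    card_pos.2 ⟨p, by rw [union_inter_distrib_right, hFH]; simp⟩
  rw [hFG, card_singleton] at hunion
  omega

lemma card_le_five_of_not_disjoint (h : ¬ Disjoint {a, b} ({c, d} : Finset ℕ)) :
    #{x, y, a, b, c, d} ≤ 5 := by
  have hpos := card_pos.2 (not_disjoint_iff_nonempty_inter.1 h)
  have hinter := card_union_add_card_inter {a, b} ({c, d} : Finset ℕ)
  have hunion := card_union_le {x, y} ({a, b} ∪ {c, d} : Finset ℕ)
  have hpair (s t : ℕ) : #{s, t} ≤ 2 := card_le_two
  have hxy := hpair x y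
  have hab := hpair a b
  have hcd := hpair c d
  simp only [insert_union, singleton_union] at hunion hinter
  omega

lemma shatters_triple (habc : ∃ G ∈ 𝒻, a ∈ G ∧ b ∈ G ∧ c ∈ G)
    (hab : ∃ G ∈ 𝒻, a ∈ G ∧ b ∈ G ∧ c ∉ G) (hac : ∃ G ∈ 𝒻, a ∈ G ∧ b ∉ G ∧ c ∈ G)
    (hbc : ∃ G ∈ 𝒻, a ∉ G ∧ b ∈ G ∧ c ∈ G) (ha : ∃ G ∈ 𝒻, a ∈ G ∧ b ∉ G ∧ c ∉ G)
    (hb : ∃ G ∈ 𝒻, a ∉ G ∧ b ∈ G ∧ c ∉ G) (hc : ∃ G ∈ 𝒻, a ∉ G ∧ b ∉ G ∧ c ∈ G)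
    (h : ∃ G ∈ 𝒻, a ∉ G ∧ b ∉ G ∧ c ∉ G) : Shatters 𝒻 {a, b, c} := by
  intro T hT
  suffices ∃ G ∈ 𝒻, (a ∈ G ↔ a ∈ T) ∧ (b ∈ G ↔ b ∈ T) ∧ (c ∈ G ↔ c ∈ T) by
    obtain ⟨G, hG, hGT⟩ := this
    exact ⟨G, hG, by ext; grind⟩
  by_cases a ∈ T <;> by_cases b ∈ T <;> by_cases c ∈ T <;> simp_all only [iff_true, iff_false]

lemma mem_of_shatters (h𝒻 : (𝒻 : Set (Finset ℕ)).Sized 3) (hF : #F = 3) (h : Shatters 𝒻 F) :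
    F ∈ 𝒻 := by
  obtain ⟨G, hG, hGF⟩ := h F Subset.rfl
  rwa [eq_of_subset_of_card_le (inter_eq_right.1 hGF) (by rw [hF, h𝒻 hG])]

/-- A family of triples of the ground set `V` that shatters no triple. Only members of `𝒻` have to
be tested, since a family of triples shatters no other triple. -/
structure IsAdmissible (V : Finset ℕ) (𝒻 : Finset (Finset ℕ)) : Prop where
  subset : ∀ F ∈ 𝒻, F ⊆ V
  sized : (𝒻 : Set (Finset ℕ)).Sized 3
  not_shatters : ∀ F ∈ 𝒻, ¬ Shatters 𝒻 F

lemma isAdmissible_iff : IsAdmissible V 𝒻 ↔ (∀ F ∈ 𝒻, F ⊆ V) ∧ (∀ F ∈ 𝒻, #F = 3) ∧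
    ∀ S ⊆ V, #S = 3 → ¬ Shatters 𝒻 S where
  mp h := ⟨h.subset, fun _ hF ↦ h.sized hF, fun S _ hS hshat ↦
    h.not_shatters S (mem_of_shatters h.sized hS hshat) hshat⟩
  mpr h := ⟨h.1, fun F hF ↦ h.2.1 F hF, fun F hF ↦ h.2.2 F (h.1 F hF) (h.2.1 F hF)⟩

/-- A minimal counterexample on the ground set `V`: the family exceeds the asserted bound, and
the bound holds for all admissible families on `V` with a point removed. -/
structure IsCritical (V : Finset ℕ) (𝒻 : Finset (Finset ℕ)) : Prop extends IsAdmissible V 𝒻 where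
  eight_le : 8 ≤ #V
  size : (#V - 1).choose 2 + 2 ≤ #𝒻
  bound : ∀ v ∈ V, ∀ 𝒢, IsAdmissible (V.erase v) 𝒢 → #𝒢 ≤ (#V - 2).choose 2 + 1

/-- The pairs completing `v` to a member of `𝒻` (the link of `v`) all meet `T`. -/
def CoversLink (𝒻 : Finset (Finset ℕ)) (v : ℕ) (T : Finset ℕ) : Prop :=
  ∀ G ∈ 𝒻, v ∈ G → ∃ w ∈ T, w ∈ G

/-- The set `T` meets every member of `𝒻`. -/
def IsTransversal (𝒻 : Finset (Finset ℕ)) (T : Finset ℕ) : Prop :=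
  ∀ G ∈ 𝒻, ∃ w ∈ T, w ∈ G

/-- The set `P`, usually a pair, lies in exactly one member of `𝒻`. -/
def IsLight (𝒻 : Finset (Finset ℕ)) (P : Finset ℕ) : Prop := ∃! F, F ∈ 𝒻 ∧ P ⊆ F

lemma exists_notMem_of_not_isLight (h𝒻 : (𝒻 : Set (Finset ℕ)).Sized 3) (e : {a, b, c} ∈ 𝒻)
    (h : ¬ IsLight 𝒻 {a, b}) : ∃ G ∈ 𝒻, a ∈ G ∧ b ∈ G ∧ c ∉ G := by
  by_contra! hall
  obtain ⟨hab, hac, hbc⟩ := ne_of_triple_mem h𝒻 e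
  refine h ⟨{a, b, c}, ⟨e, by grind⟩, fun G ⟨hG, hP⟩ ↦ ?_⟩
  have ha : a ∈ G := hP (by simp)
  have hb : b ∈ G := hP (by simp)
  exact eq_triple (h𝒻 hG) ha hb (hall G hG ha hb) hab hac hbc

lemma not_isLight_of_mem_of_mem (hF : F ∈ 𝒻) (hG : G ∈ 𝒻) (hFG : F ≠ G)
    {P : Finset ℕ} (hPF : P ⊆ F) (hPG : P ⊆ G) : ¬ IsLight 𝒻 P :=
  fun h ↦ hFG (h.unique ⟨hF, hPF⟩ ⟨hG, hPG⟩)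

lemma not_isLight_of_triple_mem (h𝒻 : (𝒻 : Set (Finset ℕ)).Sized 3) (ec : {a, b, c} ∈ 𝒻)
    (ed : {a, b, d} ∈ 𝒻) (hcd : c ≠ d) : ¬ IsLight 𝒻 {a, b} := by
  have hne := ne_of_triple_mem h𝒻 ec
  have hcd' : c ∉ ({a, b, d} : Finset ℕ) := by simp [hne.2.1.symm, hne.2.2.symm, hcd]
  exact not_isLight_of_mem_of_mem ec ed (fun h ↦ hcd' (h ▸ by simp)) (by grind) (by grind)

lemma shatters_of_not_isLight (h𝒻 : (𝒻 : Set (Finset ℕ)).Sized 3) (e : {a, b, c} ∈ 𝒻)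
    (hab : ¬ IsLight 𝒻 {a, b}) (hac : ¬ IsLight 𝒻 {a, c}) (hbc : ¬ IsLight 𝒻 {b, c})
    (ha : ∃ G ∈ 𝒻, a ∈ G ∧ b ∉ G ∧ c ∉ G) (hb : ∃ G ∈ 𝒻, a ∉ G ∧ b ∈ G ∧ c ∉ G)
    (hc : ∃ G ∈ 𝒻, a ∉ G ∧ b ∉ G ∧ c ∈ G) (h : ∃ G ∈ 𝒻, a ∉ G ∧ b ∉ G ∧ c ∉ G) :
    Shatters 𝒻 {a, b, c} := by
  obtain ⟨G, hG, hG'⟩ := exists_notMem_of_not_isLight h𝒻 e hab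
  obtain ⟨H, hH, hH'⟩ := exists_notMem_of_not_isLight h𝒻 (by rwa [pair_comm]) hac
  obtain ⟨I, hI, hI'⟩ := exists_notMem_of_not_isLight h𝒻
    (show {b, c, a} ∈ 𝒻 by rwa [pair_comm, insert_comm]) hbc
  exact shatters_triple ⟨_, e, by simp⟩ ⟨G, hG, hG'⟩ ⟨H, hH, by grind⟩ ⟨I, hI, by grind⟩
    ha hb hc h

open Classical in
lemma card_filter_isLight_le (𝒜 : Finset (Finset ℕ)) :
    #{F ∈ 𝒻 | ∃ P ∈ 𝒜, IsLight 𝒻 P ∧ P ⊆ F} ≤ #{P ∈ 𝒜 | IsLight 𝒻 P} := by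
  refine card_le_card_of_forall_subsingleton (fun F P ↦ P ⊆ F) (fun F hF ↦ ?_)
    fun P hP F hF G hG ↦ ?_
  · obtain ⟨-, P, hP, hlight, hPF⟩ := mem_filter.1 hF
    exact ⟨P, mem_filter.2 ⟨hP, hlight⟩, hPF⟩
  · exact (mem_filter.1 hP).2.unique ⟨(mem_filter.1 hF.1).1, hF.2⟩ ⟨(mem_filter.1 hG.1).1, hG.2⟩

namespace IsAdmissible

lemma filter_notMem (h : IsAdmissible V 𝒻) (v : ℕ) :
    IsAdmissible (V.erase v) {F ∈ 𝒻 | v ∉ F} where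
  subset F hF := by
    obtain ⟨hF, hv⟩ := mem_filter.1 hF
    exact subset_erase.2 ⟨h.subset F hF, hv⟩
  sized F hF := h.sized (mem_filter.1 hF).1
  not_shatters F hF hS := by
    refine h.not_shatters F (mem_filter.1 hF).1 fun T hT ↦ ?_
    obtain ⟨G, hG, hGT⟩ := hS T hT
    exact ⟨G, (mem_filter.1 hG).1, hGT⟩

lemma triple_subset (h : IsAdmissible V 𝒻) (e : {a, b, c} ∈ 𝒻) : a ∈ V ∧ b ∈ V ∧ c ∈ V := by
  simpa [insert_subset_iff] using h.subset _ e

lemma insert_triple (h : IsAdmissible V 𝒻) (habc : {a, b, c} ∈ 𝒻)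
    (habd : {a, b, d} ∈ 𝒻) (hacd : {a, c, d} ∈ 𝒻) (hbc : ∀ G ∈ 𝒻, b ∈ G → c ∈ G → a ∈ G) :
    IsAdmissible (V.erase a) (insert {b, c, d} {F ∈ 𝒻 | a ∉ F}) := by
  have h' := h.filter_notMem a
  have hb := h.triple_subset habc
  have hd := h.triple_subset habd
  have hne := ne_of_triple_mem h.sized habc
  have hne' := ne_of_triple_mem h.sized habd
  have hne'' := ne_of_triple_mem h.sized hacd
  have hcard : #{b, c, d} = 3 := by grind
  refine ⟨(forall_mem_insert ..).2 ⟨by grind, h'.subset⟩, ?_,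
    (forall_mem_insert ..).2 ⟨fun hS ↦ ?_, ?_⟩⟩
  · exact (forall_mem_insert ..).2 ⟨hcard, fun F hF ↦ h'.sized hF⟩
  · obtain ⟨G, hG, hGT⟩ := hS {b, c} (by grind)
    have hGT' : b ∈ G ∧ c ∈ G ∧ d ∉ G := by
      simp only [Finset.ext_iff, mem_inter] at hGT
      grind
    grind
  · intro F hF hS
    obtain ⟨hF, haF⟩ := mem_filter.1 hF
    refine h.not_shatters F hF fun T hT ↦ ?_
    obtain ⟨G, hG, rfl⟩ := hS T hT
    obtain rfl | hG := mem_insert.1 hG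
    · have hout : b ∉ F ∨ c ∉ F ∨ d ∉ F := by grind
      rcases hout with hb | hc | hd
      · exact ⟨_, hacd, by ext; grind⟩
      · exact ⟨_, habd, by ext; grind⟩
      · exact ⟨_, habc, by ext; grind⟩
    · exact ⟨G, (mem_filter.1 hG).1, rfl⟩

end IsAdmissible

namespace IsCritical

lemma choose_two_pred (h : IsCritical V 𝒻) : (#V - 1).choose 2 = (#V - 2).choose 2 + (#V - 2) := by
  have := h.eight_le
  obtain ⟨m, hm⟩ : ∃ m, #V = m + 2 := ⟨#V - 2, by omega⟩
  simp [hm, Nat.choose_succ_succ' m 1, add_comm]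

lemma le_degree (h : IsCritical V 𝒻) (hv : v ∈ V) : #V - 1 ≤ #{F ∈ 𝒻 | v ∈ F} := by
  have hbound := h.bound v hv _ (h.filter_notMem v)
  have hsplit := card_filter_add_card_filter_not (s := 𝒻) (v ∈ ·)
  have := h.choose_two_pred
  have := h.size
  have := h.eight_le
  omega

lemma exists_mem_mem_notMem (h : IsCritical V 𝒻) (habc : {a, b, c} ∈ 𝒻) (habd : {a, b, d} ∈ 𝒻)
    (hacd : {a, c, d} ∈ 𝒻) (hdeg : #{F ∈ 𝒻 | a ∈ F} ≤ #V - 1) :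
    ∃ G ∈ 𝒻, b ∈ G ∧ c ∈ G ∧ a ∉ G := by
  by_contra! hbc
  have hbcd : {b, c, d} ∉ 𝒻 := fun hmem ↦ by
    have := ne_of_triple_mem h.sized habc
    have := ne_of_triple_mem h.sized habd
    have := hbc _ hmem
    grind
  have hbound := h.bound a (h.triple_subset habc).1 _
    (h.toIsAdmissible.insert_triple habc habd hacd hbc)
  rw [card_insert_of_notMem fun hmem ↦ hbcd (mem_filter.1 hmem).1] at hbound
  have hsplit := card_filter_add_card_filter_not (s := 𝒻) (a ∈ ·)
  have := h.choose_two_pred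
  have := h.size
  have := h.eight_le
  omega

open Classical in
lemma exists_heavy_star_edge (h : IsCritical V 𝒻) (hv : v ∈ V) (hx : x ∈ V) (hvx : v ≠ x) :
    ∃ F ∈ 𝒻, v ∈ F ∧ x ∉ F ∧ ∀ w ∈ F, w ≠ v → ¬ IsLight 𝒻 {v, w} := by
  by_contra! hlight
  suffices hle : #{F ∈ 𝒻 | v ∈ F} ≤ #((V.erase v).erase x) by
    have := h.le_degree hv
    rw [card_erase_of_mem (by grind), card_erase_of_mem hv] at hle
    have := h.eight_le
    omega
  refine card_le_card_of_forall_subsingleton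
    (fun F w ↦ w ∈ F ∧ (x ∈ F ∨ IsLight 𝒻 {v, w})) (fun F hF ↦ ?_) fun w hw F hF G hG ↦ ?_
  · obtain ⟨hF, hvF⟩ := mem_filter.1 hF
    by_cases hxF : x ∈ F
    · obtain ⟨w, rfl⟩ := exists_eq_triple_of_pair (h.sized hF) hvF hxF hvx
      have := h.triple_subset hF
      have := ne_of_triple_mem h.sized hF
      exact ⟨w, by grind⟩
    · obtain ⟨w, hwF, hwv, hw⟩ := hlight F hF hvF hxF
      have := h.subset F hF hwF
      exact ⟨w, by grind⟩
  · obtain ⟨⟨hF, hvF⟩, hwF, hF'⟩ := (by simpa using hF : (F ∈ 𝒻 ∧ v ∈ F) ∧ _)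
    obtain ⟨⟨hG, hvG⟩, hwG, hG'⟩ := (by simpa using hG : (G ∈ 𝒻 ∧ v ∈ G) ∧ _)
    by_contra hFG
    have hnot : ¬ IsLight 𝒻 {v, w} :=
      not_isLight_of_mem_of_mem hF hG hFG (by grind) (by grind)
    have hwx : w ≠ x ∧ w ≠ v := by grind
    refine hFG ((eq_triple (h.sized hF) hvF hwF (hF'.resolve_right hnot) hwx.2.symm hvx
      hwx.1).trans (eq_triple (h.sized hG) hvG hwG (hG'.resolve_right hnot) hwx.2.symm hvx
      hwx.1).symm)

end IsCritical

/-- The points completing `v` and `x` to a triple of `𝒻`. -/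
def completions (𝒻 : Finset (Finset ℕ)) (v x : ℕ) : Finset ℕ :=
  {w ∈ 𝒻.sup id | {v, x, w} ∈ 𝒻}

lemma mem_completions : w ∈ completions 𝒻 v x ↔ {v, x, w} ∈ 𝒻 := by
  rw [completions, mem_filter, and_iff_right_iff_imp]
  exact fun e ↦ mem_sup.2 ⟨_, e, by simp⟩

lemma completions_subset (h𝒻 : (𝒻 : Set (Finset ℕ)).Sized 3) (hV : ∀ F ∈ 𝒻, F ⊆ V) :
    completions 𝒻 v x ⊆ (V.erase v).erase x := fun w hw ↦ by
  rw [mem_completions] at hw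
  have hwV : w ∈ V := hV _ hw (by simp)
  have := ne_of_triple_mem h𝒻 hw
  grind

lemma card_filter_mem_mem_le (h𝒻 : (𝒻 : Set (Finset ℕ)).Sized 3) (hvx : v ≠ x) :
    #{F ∈ 𝒻 | v ∈ F ∧ x ∈ F} ≤ #(completions 𝒻 v x) := by
  refine card_le_card_of_forall_subsingleton (fun F w ↦ F = {v, x, w}) (fun F hF ↦ ?_)
    fun w _ F ⟨_, hF⟩ G ⟨_, hG⟩ ↦ by rw [hF, hG]
  obtain ⟨hF, hvF, hxF⟩ := mem_filter.1 hF
  obtain ⟨w, rfl⟩ := exists_eq_triple_of_pair (h𝒻 hF) hvF hxF hvx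
  exact ⟨w, mem_completions.2 hF, rfl⟩

lemma degree_le_of_star (h𝒻 : (𝒻 : Set (Finset ℕ)).Sized 3) (hvx : v ≠ x)
    {X : Finset (Finset ℕ)} (hX : ∀ F ∈ 𝒻, v ∈ F → F ∈ X ∨ x ∈ F) :
    #{F ∈ 𝒻 | v ∈ F} ≤ #X + #(completions 𝒻 v x) := calc
  #{F ∈ 𝒻 | v ∈ F} ≤ #(X ∪ {F ∈ 𝒻 | v ∈ F ∧ x ∈ F}) := card_le_card fun F hF ↦ by grind
  _ ≤ #X + #{F ∈ 𝒻 | v ∈ F ∧ x ∈ F} := card_union_le ..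
  _ ≤ #X + #(completions 𝒻 v x) := by grw [card_filter_mem_mem_le h𝒻 hvx]

lemma degree_add_le_of_coversLink (h𝒻 : (𝒻 : Set (Finset ℕ)).Sized 3) (hvx : v ≠ x)
    (hvy : v ≠ y) (hcov : CoversLink 𝒻 v {x, y}) :
    #{F ∈ 𝒻 | v ∈ F} + #{F ∈ 𝒻 | v ∈ F ∧ x ∈ F ∧ y ∈ F} ≤
      #(completions 𝒻 v x ∪ completions 𝒻 v y) + #(completions 𝒻 v x ∩ completions 𝒻 v y) := by
  have hunion : {F ∈ 𝒻 | v ∈ F} = {F ∈ 𝒻 | v ∈ F ∧ x ∈ F} ∪ {F ∈ 𝒻 | v ∈ F ∧ y ∈ F} := by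
    ext F
    have := hcov F
    grind
  have hinter : {F ∈ 𝒻 | v ∈ F ∧ x ∈ F ∧ y ∈ F} =
      {F ∈ 𝒻 | v ∈ F ∧ x ∈ F} ∩ {F ∈ 𝒻 | v ∈ F ∧ y ∈ F} := by grind
  rw [hunion, hinter, card_union_add_card_inter, card_union_add_card_inter]
  exact add_le_add (card_filter_mem_mem_le h𝒻 hvx) (card_filter_mem_mem_le h𝒻 hvy)

/-- The link of `a` has the shape of a double broom: it is covered by `b` and `c`, it contains the
triangle on `b`, `c`, `d`, and each remaining point is joined to exactly one of `b` and `c`. -/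
structure IsBroom (V : Finset ℕ) (𝒻 : Finset (Finset ℕ)) (a b c d : ℕ) : Prop where
  covers : CoversLink 𝒻 a {b, c}
  abc : {a, b, c} ∈ 𝒻
  abd : {a, b, d} ∈ 𝒻
  acd : {a, c, d} ∈ 𝒻
  leaf : ∀ z ∈ V \ {a, b, c, d}, {a, b, z} ∈ 𝒻 ↔ {a, c, z} ∉ 𝒻

lemma IsBroom.degree_le (h : IsBroom V 𝒻 a b c d) (h𝒻 : (𝒻 : Set (Finset ℕ)).Sized 3)
    (hV : ∀ F ∈ 𝒻, F ⊆ V) : #{F ∈ 𝒻 | a ∈ F} ≤ #V - 1 := by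
  have hne := ne_of_triple_mem h𝒻 h.abc
  have ha : a ∈ V := hV _ h.abc (by simp)
  have habc : {a, b, c} ∈ ({F ∈ 𝒻 | a ∈ F ∧ b ∈ F ∧ c ∈ F} : Finset _) :=
    mem_filter.2 ⟨h.abc, by simp⟩
  have hunion : completions 𝒻 a b ∪ completions 𝒻 a c ⊆ V.erase a := union_subset
    ((completions_subset h𝒻 hV).trans (erase_subset ..))
    ((completions_subset h𝒻 hV).trans (erase_subset ..))
  have hinter : completions 𝒻 a b ∩ completions 𝒻 a c ⊆ {d} := fun w hw ↦ by
    simp only [mem_inter, mem_completions] at hw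
    have := h.leaf w
    have := hV _ hw.1
    have := ne_of_triple_mem h𝒻 hw.1
    have := ne_of_triple_mem h𝒻 hw.2
    grind
  have hdeg := degree_add_le_of_coversLink h𝒻 hne.1 hne.2.1 h.covers
  have := card_pos.2 ⟨_, habc⟩
  have hunion' := card_le_card hunion
  have hinter' := card_le_card hinter
  rw [card_erase_of_mem ha] at hunion'
  rw [card_singleton] at hinter'
  omega

lemma completions_of_card_inter_le_one (h𝒻 : (𝒻 : Set (Finset ℕ)).Sized 3)
    (hV : ∀ F ∈ 𝒻, F ⊆ V) (hx : x ∈ V.erase v) (hy : y ∈ V.erase v) (hxy : x ≠ y)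
    (hcov : CoversLink 𝒻 v {x, y}) (hdeg : #(V.erase v) ≤ #{F ∈ 𝒻 | v ∈ F})
    (hcommon : #(completions 𝒻 v x ∩ completions 𝒻 v y) ≤ 1) :
    {v, x, y} ∈ 𝒻 ∧ completions 𝒻 v x ∪ completions 𝒻 v y = V.erase v ∧
      #(completions 𝒻 v x ∩ completions 𝒻 v y) = 1 := by
  have hle := degree_add_le_of_coversLink h𝒻 (by grind) (by grind) hcov
  have hsubx := completions_subset (v := v) (x := x) h𝒻 hV
  have hsuby := completions_subset (v := v) (x := y) h𝒻 hV
  have hvxy : {v, x, y} ∈ 𝒻 := by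
    by_contra hvxy
    have hx' : x ∉ completions 𝒻 v y := by rwa [mem_completions, pair_comm]
    have hy' : y ∉ completions 𝒻 v x := by rwa [mem_completions]
    have hcard := card_le_card (show completions 𝒻 v x ∪ completions 𝒻 v y ⊆
      ((V.erase v).erase x).erase y by grind)
    have := card_pos.2 ⟨y, show y ∈ (V.erase v).erase x by grind⟩
    rw [card_erase_of_mem (by grind)] at hcard
    rw [card_erase_of_mem hx] at hcard this
    omega
  have hpos := card_pos.2 ⟨_, show {v, x, y} ∈ ({F ∈ 𝒻 | v ∈ F ∧ x ∈ F ∧ y ∈ F} : Finset _) from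
    mem_filter.2 ⟨hvxy, by simp⟩⟩
  have hunion : completions 𝒻 v x ∪ completions 𝒻 v y ⊆ V.erase v := by grind
  have hunion' := card_le_card hunion
  exact ⟨hvxy, eq_of_subset_of_card_le hunion (by omega), by omega⟩

lemma exists_two_common_or_isBroom (h𝒻 : (𝒻 : Set (Finset ℕ)).Sized 3) (hV : ∀ F ∈ 𝒻, F ⊆ V)
    (hx : x ∈ V.erase v) (hy : y ∈ V.erase v) (hxy : x ≠ y) (hcov : CoversLink 𝒻 v {x, y})
    (hdeg : #(V.erase v) ≤ #{F ∈ 𝒻 | v ∈ F}) :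
    (∃ w₁ w₂, w₁ ≠ w₂ ∧ {v, x, w₁} ∈ 𝒻 ∧ {v, y, w₁} ∈ 𝒻 ∧ {v, x, w₂} ∈ 𝒻 ∧ {v, y, w₂} ∈ 𝒻) ∨
      ∃ w, IsBroom V 𝒻 v x y w := by
  obtain hcommon | hcommon := lt_or_ge 1 #(completions 𝒻 v x ∩ completions 𝒻 v y)
  · obtain ⟨w₁, h₁, w₂, h₂, hw⟩ := one_lt_card.1 hcommon
    simp only [mem_inter, mem_completions] at h₁ h₂
    exact .inl ⟨w₁, w₂, hw, h₁.1, h₁.2, h₂.1, h₂.2⟩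
  · obtain ⟨hvxy, hunion, hinter⟩ :=
      completions_of_card_inter_le_one h𝒻 hV hx hy hxy hcov hdeg hcommon
    obtain ⟨w, hw⟩ := card_eq_one.1 hinter
    simp only [Finset.ext_iff, mem_union, mem_inter, mem_completions, mem_singleton,
      mem_erase] at hunion hw
    refine .inr ⟨w, hcov, hvxy, ((hw w).2 rfl).1, ((hw w).2 rfl).2, fun z hz ↦ ?_⟩
    have := hunion z
    have := hw z
    grind

lemma IsAdmissible.coversLink_or_isTransversal (h : IsAdmissible V 𝒻) (e : {a, b, c} ∈ 𝒻)
    (hab : ∃ G ∈ 𝒻, a ∈ G ∧ b ∈ G ∧ c ∉ G) (hac : ∃ G ∈ 𝒻, a ∈ G ∧ b ∉ G ∧ c ∈ G)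
    (hbc : ∃ G ∈ 𝒻, a ∉ G ∧ b ∈ G ∧ c ∈ G) :
    CoversLink 𝒻 a {b, c} ∨ CoversLink 𝒻 b {a, c} ∨ CoversLink 𝒻 c {a, b} ∨
      IsTransversal 𝒻 {a, b, c} := by
  by_contra! hnot
  simp only [CoversLink, IsTransversal, mem_insert, mem_singleton, exists_eq_or_imp,
    exists_eq_left, not_forall, not_or] at hnot
  obtain ⟨⟨A, hA, hA'⟩, ⟨B, hB, hB'⟩, ⟨C, hC, hC'⟩, ⟨D, hD, hD'⟩⟩ := hnot
  exact h.not_shatters _ e (shatters_triple ⟨_, e, by simp⟩ hab hac hbc ⟨A, hA, by tauto⟩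
    ⟨B, hB, by tauto⟩ ⟨C, hC, by tauto⟩ ⟨D, hD, by tauto⟩)

open Classical in
lemma card_le_of_forall_exists_isLight (h𝒻 : (𝒻 : Set (Finset ℕ)).Sized 3) (hV : ∀ F ∈ 𝒻, F ⊆ V)
    (K : Finset ℕ) (hone : ∀ z ∈ V \ K, #{F ∈ 𝒻 | F \ K = {z}} ≤ 3)
    (htwo : ∀ F ∈ 𝒻, 2 ≤ #(F \ K) → ∃ P ⊆ F \ K, #P = 2 ∧ IsLight 𝒻 P) :
    #𝒻 ≤ (#K).choose 3 + #(V \ K) * 3 + (#(V \ K)).choose 2 := by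
  have hcover : 𝒻 ⊆ powersetCard 3 K ∪ (V \ K).biUnion (fun z ↦ {F ∈ 𝒻 | F \ K = {z}}) ∪
      {F ∈ 𝒻 | ∃ P ∈ powersetCard 2 (V \ K), IsLight 𝒻 P ∧ P ⊆ F} := fun F hF ↦ by
    have hFK : F \ K ⊆ V \ K := sdiff_subset_sdiff (hV F hF) Subset.rfl
    simp only [mem_union, mem_powersetCard, mem_biUnion, mem_filter]
    obtain h0 | h1 | h2 : #(F \ K) = 0 ∨ #(F \ K) = 1 ∨ 2 ≤ #(F \ K) := by omega
    · exact .inl (.inl ⟨sdiff_eq_empty_iff_subset.1 (card_eq_zero.1 h0), h𝒻 hF⟩)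
    · obtain ⟨z, hz⟩ := card_eq_one.1 h1
      exact .inl (.inr ⟨z, hFK (hz ▸ mem_singleton_self z), hF, hz⟩)
    · obtain ⟨P, hPF, hP, hlight⟩ := htwo F hF h2
      exact .inr ⟨hF, P, ⟨hPF.trans hFK, hP⟩, hlight, hPF.trans sdiff_subset⟩
  calc #𝒻 ≤ _ := card_le_card hcover
    _ ≤ #(powersetCard 3 K) + #((V \ K).biUnion fun z ↦ {F ∈ 𝒻 | F \ K = {z}}) +
        #{F ∈ 𝒻 | ∃ P ∈ powersetCard 2 (V \ K), IsLight 𝒻 P ∧ P ⊆ F} := by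
      grw [card_union_le, card_union_le]
    _ ≤ #(powersetCard 3 K) + #(V \ K) * 3 + #(powersetCard 2 (V \ K)) := by
      grw [card_biUnion_le_card_mul _ _ _ hone, card_filter_isLight_le, filter_subset]
    _ = _ := by rw [card_powersetCard, card_powersetCard]

namespace IsCritical

lemma completions_eq_of_star (hC : IsCritical V 𝒻) (hv : v ∈ V) (hx : x ∈ V) (hvx : v ≠ x)
    {E : Finset ℕ} (hstar : ∀ F ∈ 𝒻, v ∈ F → F = E ∨ x ∈ F) :
    completions 𝒻 v x = (V.erase v).erase x := by
  refine eq_of_subset_of_card_le (completions_subset hC.sized hC.subset) ?_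
  have hdeg := degree_le_of_star hC.sized hvx (X := {E}) (by simpa using hstar)
  have := hC.le_degree hv
  rw [card_singleton] at hdeg
  rw [card_erase_of_mem (by grind), card_erase_of_mem hv]
  omega

lemma mem_of_star (hC : IsCritical V 𝒻) (hv : v ∈ V) (hx : x ∈ V) (hvx : v ≠ x)
    (E : Finset ℕ) (hstar : ∀ F ∈ 𝒻, v ∈ F → F = E ∨ x ∈ F) (hw : w ∈ V) (hwv : w ≠ v)
    (hwx : w ≠ x) : {v, x, w} ∈ 𝒻 := by
  rw [← mem_completions, hC.completions_eq_of_star hv hx hvx hstar]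
  grind

end IsCritical

namespace IsBroom

protected lemma symm (h : IsBroom V 𝒻 a b c d) : IsBroom V 𝒻 a c b d where
  covers := pair_comm b c ▸ h.covers
  abc := pair_comm b c ▸ h.abc
  abd := h.acd
  acd := h.abd
  leaf z hz := by
    have := h.leaf z (by grind)
    tauto

lemma pairwise_ne (h : IsBroom V 𝒻 a b c d) (h𝒻 : (𝒻 : Set (Finset ℕ)).Sized 3) :
    a ≠ b ∧ a ≠ c ∧ a ≠ d ∧ b ≠ c ∧ b ≠ d ∧ c ≠ d := by
  have := ne_of_triple_mem h𝒻 h.abc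
  have := ne_of_triple_mem h𝒻 h.abd
  have := ne_of_triple_mem h𝒻 h.acd
  grind

lemma mem_ground (h : IsBroom V 𝒻 a b c d) (hV : ∀ F ∈ 𝒻, F ⊆ V) :
    a ∈ V ∧ b ∈ V ∧ c ∈ V ∧ d ∈ V :=
  ⟨hV _ h.abc (by simp), hV _ h.abc (by simp), hV _ h.abc (by simp), hV _ h.abd (by simp)⟩

lemma card_core_and_card_leaves (h : IsBroom V 𝒻 a b c d) (hC : IsCritical V 𝒻) :
    #({a, b, c, d} : Finset ℕ) = 4 ∧ #(V \ {a, b, c, d}) = #V - 4 := by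
  have := h.pairwise_ne hC.sized
  have hK : #({a, b, c, d} : Finset ℕ) = 4 := by grind
  refine ⟨hK, ?_⟩
  rw [card_sdiff_of_subset (by simpa [insert_subset_iff] using h.mem_ground hC.subset), hK]

lemma eq_of_mem_of_mem (h : IsBroom V 𝒻 a b c d) (h𝒻 : (𝒻 : Set (Finset ℕ)).Sized 3)
    (hz : z ∈ V \ {a, b, c, d}) {F G : Finset ℕ} (hF : F ∈ 𝒻) (hG : G ∈ 𝒻) (haF : a ∈ F)
    (hzF : z ∈ F) (haG : a ∈ G) (hzG : z ∈ G) : F = G := by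
  have hne := h.pairwise_ne h𝒻
  have hleaf := h.leaf z hz
  have hform : ∀ F ∈ 𝒻, a ∈ F → z ∈ F →
      F = {a, b, z} ∧ {a, c, z} ∉ 𝒻 ∨ F = {a, c, z} ∧ {a, b, z} ∉ 𝒻 := fun F hF haF hzF ↦ by
    have hcov := h.covers F hF haF
    have := eq_triple (b := b) (h𝒻 hF) haF (c := z)
    have := eq_triple (b := c) (h𝒻 hF) haF (c := z)
    grind
  have := hform F hF haF hzF
  have := hform G hG haG hzG
  grind

lemma exists_leaf_edge (h : IsBroom V 𝒻 a b c d) (hz : z ∈ V \ {a, b, c, d}) :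
    ∃ m, (m = b ∨ m = c) ∧ {a, m, z} ∈ 𝒻 := by
  have := h.leaf z hz
  by_cases hb : {a, b, z} ∈ 𝒻
  · exact ⟨b, .inl rfl, hb⟩
  · exact ⟨c, .inr rfl, by tauto⟩

lemma exists_isLight_of_subset (h : IsBroom V 𝒻 a b c d) (hC : IsCritical V 𝒻) (hF : F ∈ 𝒻)
    (hFZ : F ⊆ V \ {a, b, c, d}) : ∃ P ⊆ F, #P = 2 ∧ IsLight 𝒻 P := by
  obtain ⟨x, y, z, hxy, hxz, hyz, rfl⟩ := card_eq_three.1 (hC.sized hF)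
  simp only [insert_subset_iff, singleton_subset_iff] at hFZ
  by_contra! hheavy
  obtain ⟨i, hi, hx⟩ := h.exists_leaf_edge hFZ.1
  obtain ⟨j, hj, hy⟩ := h.exists_leaf_edge hFZ.2.1
  obtain ⟨k, hk, hz⟩ := h.exists_leaf_edge hFZ.2.2
  exact hC.not_shatters _ hF (shatters_of_not_isLight hC.sized hF
    (hheavy _ (by grind) (card_pair hxy)) (hheavy _ (by grind) (card_pair hxz))
    (hheavy _ (by grind) (card_pair hyz)) ⟨_, hx, by grind⟩ ⟨_, hy, by grind⟩ ⟨_, hz, by grind⟩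
    ⟨_, h.abc, by grind⟩)

lemma card_filter_sdiff_eq_singleton_le (h : IsBroom V 𝒻 a b c d)
    (h𝒻 : (𝒻 : Set (Finset ℕ)).Sized 3) (hz : z ∈ V \ {a, b, c, d}) (hbc : {z, b, c} ∉ 𝒻) :
    #{F ∈ 𝒻 | F \ {a, b, c, d} = {z}} ≤ 3 := by
  obtain ⟨m, -, hm⟩ := h.exists_leaf_edge hz
  refine le_trans (card_le_card (t := {{a, m, z}, {z, b, d}, {z, c, d}}) fun F hF ↦ ?_)
    card_le_three
  obtain ⟨hF, hFK⟩ := mem_filter.1 hF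
  have hzF : z ∈ F := sdiff_subset (hFK ▸ mem_singleton_self z)
  by_cases haF : a ∈ F
  · simp [h.eq_of_mem_of_mem h𝒻 hz hF hm haF hzF (by simp) (by simp)]
  obtain ⟨p, q, rfl⟩ := exists_eq_triple (h𝒻 hF) hzF
  have hne := ne_of_triple_mem h𝒻 hF
  have hK : ∀ w ∈ ({z, p, q} : Finset ℕ), w ≠ z → w ∈ ({b, c, d} : Finset ℕ) := fun w hw hwz ↦ by
    have : w ∉ ({z, p, q} : Finset ℕ) \ {a, b, c, d} := by simpa [hFK] using hwz
    grind
  have hp := hK p (by simp) hne.1.symm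
  have hq := hK q (by simp) hne.2.1.symm
  simp only [mem_insert, mem_singleton] at hp hq ⊢
  rcases hp with rfl | rfl | rfl <;> rcases hq with rfl | rfl | rfl <;>
    simp_all [pair_comm]

lemma false_of_isLight (h : IsBroom V 𝒻 a b c d) (hC : IsCritical V 𝒻)
    (hbc : ∀ z ∈ V \ {a, b, c, d}, {z, b, c} ∉ 𝒻)
    (hpair : ∀ p ∈ ({b, c, d} : Finset ℕ), ∀ z ∈ V \ {a, b, c, d}, ∀ w ∈ V \ {a, b, c, d},
      {p, z, w} ∈ 𝒻 → IsLight 𝒻 {z, w}) : False := by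
  have hle := card_le_of_forall_exists_isLight hC.sized hC.subset {a, b, c, d}
    (fun z hz ↦ h.card_filter_sdiff_eq_singleton_le hC.sized hz (hbc z hz)) fun F hF hFK ↦ ?_
  · have := hC.size
    have := hC.eight_le
    obtain ⟨m, hm⟩ : ∃ m, #V = m + 4 := ⟨#V - 4, by omega⟩
    rw [(h.card_core_and_card_leaves hC).1, (h.card_core_and_card_leaves hC).2] at hle
    have hchoose : (m + 3).choose 2 = m.choose 2 + 3 * m + 3 := by
      simp only [Nat.choose_succ_succ' _ 1, Nat.choose_one_right]
      ring
    simp only [hm, Nat.add_sub_cancel, show m + 4 - 1 = m + 3 by omega] at *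
    have : Nat.choose 4 3 = 4 := rfl
    omega
  by_cases hdisj : F ⊆ V \ {a, b, c, d}
  · rw [sdiff_eq_self_of_disjoint (disjoint_of_subset_left hdisj sdiff_disjoint)]
    exact h.exists_isLight_of_subset hC hF hdisj
  obtain ⟨p, hpF, hp⟩ := not_subset.1 hdisj
  have hpV := hC.subset F hF hpF
  obtain ⟨z, w, rfl, hsdiff⟩ := exists_sdiff_eq_pair (hC.sized hF) hpF (by grind) hFK
  obtain ⟨hz, hw⟩ : z ∈ V \ {a, b, c, d} ∧ w ∈ V \ {a, b, c, d} := by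
    have := sdiff_subset_sdiff (hC.subset _ hF) (Subset.refl {a, b, c, d})
    rwa [hsdiff, insert_subset_iff, singleton_subset_iff] at this
  have hpa : p ≠ a := by
    rintro rfl
    obtain ⟨m, hm, hmF⟩ := h.covers _ hF (by simp)
    have := h.pairwise_ne hC.sized
    grind
  rw [hsdiff]
  exact ⟨{z, w}, Subset.rfl, card_pair (ne_of_triple_mem hC.sized hF).2.2,
    hpair p (by grind) z hz w hw hF⟩

lemma exists_two_common_or_isBroom_erase (h : IsBroom V 𝒻 a b c d) (hC : IsCritical V 𝒻)
    (hT : IsTransversal 𝒻 {a, c, d}) (hz : z ∈ V \ {a, b, c, d}) :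
    (∃ w₁ w₂, w₁ ≠ w₂ ∧ {z, c, w₁} ∈ 𝒻 ∧ {z, d, w₁} ∈ 𝒻 ∧ {z, c, w₂} ∈ 𝒻 ∧ {z, d, w₂} ∈ 𝒻) ∨
      ∃ w, IsBroom (V.erase a) {F ∈ 𝒻 | a ∉ F} z c d w := by
  have hne := h.pairwise_ne hC.sized
  have hmem := h.mem_ground hC.subset
  have hA := hC.toIsAdmissible.filter_notMem a
  have hcov : CoversLink {F ∈ 𝒻 | a ∉ F} z {c, d} := fun G hG _ ↦ by
    obtain ⟨w, hw, hwG⟩ := hT G (mem_filter.1 hG).1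
    grind
  have hone : #{F ∈ {F ∈ 𝒻 | z ∈ F} | a ∈ F} ≤ 1 := card_le_one.2 fun F hF G hG ↦ by
    simp only [mem_filter] at hF hG
    exact h.eq_of_mem_of_mem hC.sized hz hF.1.1 hG.1.1 hF.2 hF.1.2 hG.2 hG.1.2
  have hdeg : #((V.erase a).erase z) ≤ #{F ∈ {F ∈ 𝒻 | a ∉ F} | z ∈ F} := by
    have hsplit := card_filter_add_card_filter_not (s := {F ∈ 𝒻 | z ∈ F}) (a ∈ ·)
    have := hC.le_degree (v := z) (by grind)
    rw [card_erase_of_mem (by grind), card_erase_of_mem hmem.1, filter_comm]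
    omega
  refine (exists_two_common_or_isBroom hA.sized hA.subset (by grind) (by grind) hne.2.2.2.2.2
    hcov hdeg).imp_left ?_
  rintro ⟨w₁, w₂, hw, hc₁, hd₁, hc₂, hd₂⟩
  exact ⟨w₁, w₂, hw, (mem_filter.1 hc₁).1, (mem_filter.1 hd₁).1, (mem_filter.1 hc₂).1,
    (mem_filter.1 hd₂).1⟩

lemma exists_mem_mem_notMem_of_isTransversal (h : IsBroom V 𝒻 a b c d) (hC : IsCritical V 𝒻)
    (hT : IsTransversal 𝒻 {a, c, d}) (hz : z ∈ V \ {a, b, c, d}) (hxz : x ≠ z) (hxc : x ≠ c)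
    (hxd : x ≠ d) : ∃ G ∈ 𝒻, z ∈ G ∧ d ∈ G ∧ x ∉ G := by
  obtain ⟨w₁, w₂, hw, -, h₁, -, h₂⟩ | ⟨w, hw⟩ := h.exists_two_common_or_isBroom_erase hC hT hz
  · obtain hx | hx : x ≠ w₁ ∨ x ≠ w₂ := by grind
    · exact ⟨_, h₁, by grind⟩
    · exact ⟨_, h₂, by grind⟩
  · exact ⟨_, (mem_filter.1 hw.abc).1, by grind⟩

lemma eq_of_common_of_isTransversal (h : IsBroom V 𝒻 a b c d) (hC : IsCritical V 𝒻)
    (hT : IsTransversal 𝒻 {a, c, d}) (hz : z ∈ V \ {a, b, c, d}) (hc : {z, c, w} ∈ 𝒻)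
    (hd : {z, d, w} ∈ 𝒻) : w = b := by
  by_contra hwb
  have hne := h.pairwise_ne hC.sized
  have hnec := ne_of_triple_mem hC.sized hc
  have hned := ne_of_triple_mem hC.sized hd
  have hwa : w ≠ a := by
    rintro rfl
    obtain ⟨m, hm, hm'⟩ := h.covers _ hd (by simp)
    grind
  have hw : w ∈ V \ {a, b, c, d} := by
    have := (hC.triple_subset hd).2.2
    grind
  obtain ⟨G, hG, hzG⟩ := h.exists_mem_mem_notMem_of_isTransversal hC hT hz (x := w)
    hned.2.1.symm hnec.2.2.symm hned.2.2.symm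
  obtain ⟨H, hH, hwH⟩ := h.exists_mem_mem_notMem_of_isTransversal hC hT hw (x := z)
    hned.2.1 hnec.1 hned.1
  obtain ⟨i, hi, ei⟩ := h.exists_leaf_edge hz
  obtain ⟨j, hj, ej⟩ := h.exists_leaf_edge hw
  exact hC.not_shatters _ hd (shatters_triple ⟨_, hd, by simp⟩ ⟨G, hG, by grind⟩
    ⟨_, hc, by grind⟩ ⟨H, hH, by grind⟩ ⟨_, ei, by grind⟩ ⟨_, h.abd, by grind⟩
    ⟨_, ej, by grind⟩ ⟨_, h.abc, by grind⟩)

lemma isBroom_erase_of_isTransversal (h : IsBroom V 𝒻 a b c d) (hC : IsCritical V 𝒻)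
    (hT : IsTransversal 𝒻 {a, c, d}) (hz : z ∈ V \ {a, b, c, d}) :
    IsBroom (V.erase a) {F ∈ 𝒻 | a ∉ F} z c d b := by
  have heq w := h.eq_of_common_of_isTransversal hC hT hz (w := w)
  obtain ⟨w₁, w₂, hw, hc₁, hd₁, hc₂, hd₂⟩ | ⟨w, hw⟩ :=
    h.exists_two_common_or_isBroom_erase hC hT hz
  · exact absurd ((heq w₁ hc₁ hd₁).trans (heq w₂ hc₂ hd₂).symm) hw
  · rwa [← heq w (mem_filter.1 hw.abd).1 (mem_filter.1 hw.acd).1]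

lemma notMem_and_notMem_of_isTransversal (h : IsBroom V 𝒻 a b c d) (hC : IsCritical V 𝒻)
    (hT : IsTransversal 𝒻 {a, c, d}) {p q : ℕ} (hpq : p = c ∧ q = d ∨ p = d ∧ q = c)
    (hx : x ∈ V \ {a, b, c, d}) (hy : y ∈ V \ {a, b, c, d}) (hz : z ∈ V \ {a, b, c, d})
    (hxy : x ≠ y) (hxz : x ≠ z) (e : {y, q, z} ∈ 𝒻) : {x, q, y} ∉ 𝒻 ∧ {x, q, z} ∉ 𝒻 := by
  have hne := h.pairwise_ne hC.sized
  have hB := h.isBroom_erase_of_isTransversal hC hT hx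
  have habp : {a, b, p} ∈ 𝒻 := by obtain ⟨rfl, rfl⟩ | ⟨rfl, rfl⟩ := hpq; exacts [h.abc, h.abd]
  have habq : {a, b, q} ∈ 𝒻 := by obtain ⟨rfl, rfl⟩ | ⟨rfl, rfl⟩ := hpq; exacts [h.abd, h.abc]
  obtain ⟨hpq', hpb, hqb⟩ : {x, p, q} ∈ 𝒻 ∧ {x, p, b} ∈ 𝒻 ∧ {x, q, b} ∈ 𝒻 := by
    obtain ⟨rfl, rfl⟩ | ⟨rfl, rfl⟩ := hpq
    · exact ⟨(mem_filter.1 hB.abc).1, (mem_filter.1 hB.abd).1, (mem_filter.1 hB.acd).1⟩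
    · exact ⟨(mem_filter.1 hB.symm.abc).1, (mem_filter.1 hB.acd).1, (mem_filter.1 hB.abd).1⟩
  have hcov : CoversLink 𝒻 x {p, b} := by
    obtain hcov | hcov | hcov | hcov := hC.coversLink_or_isTransversal hpb ⟨_, hpq', by grind⟩
      ⟨_, hqb, by grind⟩ ⟨_, habp, by grind⟩
    · exact hcov
    · obtain ⟨w, hw, hw'⟩ := hcov _ h.acd (by grind)
      grind
    · obtain ⟨w, hw, hw'⟩ := hcov _ habq (by grind)
      grind
    · obtain ⟨w, hw, hw'⟩ := hcov _ e
      grind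
  constructor <;> intro e <;> obtain ⟨m, hm, hm'⟩ := hcov _ e (by simp) <;> grind

lemma not_isTransversal (h : IsBroom V 𝒻 a b c d) (hC : IsCritical V 𝒻) :
    ¬ IsTransversal 𝒻 {a, c, d} := fun hT ↦ by
  have hne := h.pairwise_ne hC.sized
  obtain ⟨x, hx, y, hy, z, hz, hxy, hxz, hyz⟩ := two_lt_card.1 (show 2 < #(V \ {a, b, c, d}) by
    have := hC.eight_le
    have := (h.card_core_and_card_leaves hC).2
    omega)
  have hcolor {u w : ℕ} (hu : u ∈ V \ {a, b, c, d}) (hw : w ∈ V \ {a, b, c, d})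
      (huw : u ≠ w) :
      {u, c, w} ∈ 𝒻 ↔ {u, d, w} ∉ 𝒻 := by
    have := (h.isBroom_erase_of_isTransversal hC hT hu).leaf w (by grind)
    grind
  have hswap (m u w : ℕ) : ({u, m, w} : Finset ℕ) = {w, m, u} := by grind
  have hc {u v w : ℕ} := h.notMem_and_notMem_of_isTransversal hC hT (x := u) (y := v) (z := w)
    (.inr ⟨rfl, rfl⟩)
  have hd {u v w : ℕ} := h.notMem_and_notMem_of_isTransversal hC hT (x := u) (y := v) (z := w)
    (.inl ⟨rfl, rfl⟩)
  -- Among the three pairs of leaves at most one is joined to `c` and at most one is joined to `d`.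
  have hcx := hc hx hy hz hxy hxz
  have hdx := hd hx hy hz hxy hxz
  have hcy := hc hy hx hz hxy.symm hyz
  have hdy := hd hy hx hz hxy.symm hyz
  have hcz := hc hz hx hy hxz.symm hyz.symm
  have hdz := hd hz hx hy hxz.symm hyz.symm
  simp only [hswap _ y x, hswap _ z x, hswap _ z y, hcolor hx hy hxy, hcolor hx hz hxz,
    hcolor hy hz hyz] at hcx hdx hcy hdy hcz hdz
  tauto

lemma coversLink_or_coversLink (h : IsBroom V 𝒻 a b c d) (hC : IsCritical V 𝒻)
    (hz : z ∈ V \ {a, b, c, d}) (hbz : {a, b, z} ∈ 𝒻) :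
    CoversLink 𝒻 c {a, d} ∨ CoversLink 𝒻 d {a, c} := by
  have hne := h.pairwise_ne hC.sized
  obtain ⟨G, hG, hG'⟩ := hC.exists_mem_mem_notMem h.acd (pair_comm b c ▸ h.abc)
    (pair_comm b d ▸ h.abd) (h.degree_le hC.sized hC.subset)
  obtain hcov | hcov | hcov | hcov := hC.coversLink_or_isTransversal h.acd ⟨_, h.abc, by grind⟩
    ⟨_, h.abd, by grind⟩ ⟨G, hG, by grind⟩
  · obtain ⟨w, hw, hw'⟩ := hcov _ hbz (by simp)
    grind
  · exact .inl hcov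
  · exact .inr hcov
  · exact absurd hcov (h.not_isTransversal hC)

lemma false_of_one_star (h : IsBroom V 𝒻 a b c d) (hC : IsCritical V 𝒻)
    (hstar : ∀ z ∈ V \ {a, b, c, d}, {a, c, z} ∉ 𝒻) (hcov : CoversLink 𝒻 c {a, d}) : False := by
  have hne := h.pairwise_ne hC.sized
  have hmem := h.mem_ground hC.subset
  have hab z (hz : z ∈ V \ {a, b, c, d}) : {a, b, z} ∈ 𝒻 := (h.leaf z hz).2 (hstar z hz)
  have hcd z (hz : z ∈ V \ {a, b, c, d}) : {c, d, z} ∈ 𝒻 := by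
    refine hC.mem_of_star hmem.2.2.1 hmem.2.2.2 hne.2.2.2.2.2 {a, c, b} (fun F hF hcF ↦ ?_)
      (by grind) (by grind) (by grind)
    obtain ⟨m, hm, hmF⟩ := hcov F hF hcF
    obtain rfl | rfl : m = a ∨ m = d := by simpa using hm
    · obtain ⟨u, rfl⟩ := exists_eq_triple_of_pair (hC.sized hF) hmF hcF hne.2.1
      have := ne_of_triple_mem hC.sized hF
      have := hC.triple_subset hF
      have := hstar u
      grind
    · exact .inr hmF
  refine h.false_of_isLight hC (fun z hz e ↦ ?_) fun p hp z hz w hw e ↦ ?_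
  · obtain ⟨m, hm, hm'⟩ := hcov _ e (by simp)
    grind
  by_contra hlight
  have hnezw := ne_of_triple_mem hC.sized e
  obtain ⟨G, hG, hG'⟩ := exists_notMem_of_not_isLight hC.sized
    (show {z, w, p} ∈ 𝒻 by rwa [pair_comm, insert_comm]) hlight
  obtain rfl | rfl | rfl : p = b ∨ p = c ∨ p = d := by simpa using hp
  · exact hC.not_shatters _ e (shatters_triple ⟨_, e, by simp⟩ ⟨_, hab z hz, by grind⟩
      ⟨_, hab w hw, by grind⟩ ⟨G, hG, by grind⟩ ⟨_, h.abd, by grind⟩ ⟨_, hcd z hz, by grind⟩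
      ⟨_, hcd w hw, by grind⟩ ⟨_, h.acd, by grind⟩)
  · obtain ⟨m, hm, hm'⟩ := hcov _ e (by simp)
    grind
  · exact hC.not_shatters _ e (shatters_triple ⟨_, e, by simp⟩ ⟨_, hcd z hz, by grind⟩
      ⟨_, hcd w hw, by grind⟩ ⟨G, hG, by grind⟩ ⟨_, h.acd, by grind⟩ ⟨_, hab z hz, by grind⟩
      ⟨_, hab w hw, by grind⟩ ⟨_, h.abc, by grind⟩)

lemma swap_of_one_star (h : IsBroom V 𝒻 a b c d) (h𝒻 : (𝒻 : Set (Finset ℕ)).Sized 3)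
    (hV : ∀ F ∈ 𝒻, F ⊆ V) (hstar : ∀ z ∈ V \ {a, b, c, d}, {a, c, z} ∉ 𝒻) :
    IsBroom V 𝒻 a b d c where
  covers F hF haF := by
    obtain ⟨m, hm, hmF⟩ := h.covers F hF haF
    obtain rfl | rfl : m = b ∨ m = c := by simpa using hm
    · exact ⟨m, by simp, hmF⟩
    · have hne := h.pairwise_ne h𝒻
      obtain ⟨u, rfl⟩ := exists_eq_triple_of_pair (h𝒻 hF) haF hmF hne.2.1
      have := ne_of_triple_mem h𝒻 hF
      have : u ∈ V := hV _ hF (by simp)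
      have := hstar u
      grind
  abc := h.abd
  abd := h.abc
  acd := pair_comm c d ▸ h.acd
  leaf z hz := by
    have hne := h.pairwise_ne h𝒻
    have hz' : z ∈ V \ {a, b, c, d} := by grind
    refine iff_of_true ((h.leaf z hz').2 (hstar z hz')) fun e ↦ ?_
    obtain ⟨m, hm, hm'⟩ := h.covers _ e (by simp)
    grind

lemma leaves_nonempty (h : IsBroom V 𝒻 a b c d) (hC : IsCritical V 𝒻) :
    (V \ {a, b, c, d}).Nonempty := by
  rw [← card_pos, (h.card_core_and_card_leaves hC).2]
  have := hC.eight_le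
  omega

lemma exists_leaf_mem (h : IsBroom V 𝒻 a b c d) (hC : IsCritical V 𝒻) :
    ∃ z ∈ V \ {a, b, c, d}, {a, c, z} ∈ 𝒻 := by
  by_contra! hstar
  obtain ⟨z, hz⟩ := h.leaves_nonempty hC
  obtain hcov | hcov := h.coversLink_or_coversLink hC hz ((h.leaf z hz).2 (hstar z hz))
  · exact h.false_of_one_star hC hstar hcov
  · refine (h.swap_of_one_star hC.sized hC.subset hstar).false_of_one_star hC (fun z hz e ↦ ?_) hcov
    obtain ⟨m, hm, hm'⟩ := h.covers _ e (by simp)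
    have hne := h.pairwise_ne hC.sized
    grind

lemma coversLink_left (h : IsBroom V 𝒻 a b c d) (hC : IsCritical V 𝒻) :
    CoversLink 𝒻 c {a, d} := by
  have hne := h.pairwise_ne hC.sized
  have hmem := h.mem_ground hC.subset
  obtain ⟨y, hy, hcy⟩ := h.exists_leaf_mem hC
  obtain ⟨z, hz, hbz⟩ := h.symm.exists_leaf_mem hC
  replace hz : z ∈ V \ {a, b, c, d} := by grind
  have hby : {a, b, y} ∉ 𝒻 := fun e ↦ (h.leaf y hy).1 e hcy
  refine (h.coversLink_or_coversLink hC hz hbz).resolve_right fun hd ↦ ?_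
  have hdcz : {d, c, z} ∈ 𝒻 := by
    refine hC.mem_of_star hmem.2.2.2 hmem.2.2.1 hne.2.2.2.2.2.symm {d, a, b} (fun F hF hdF ↦ ?_)
      (by grind) (by grind) (by grind)
    obtain ⟨m, hm, hmF⟩ := hd F hF hdF
    obtain rfl | rfl : m = a ∨ m = c := by simpa using hm
    · have := h.covers F hF hmF
      have := eq_triple (a := d) (b := m) (c := b) (hC.sized hF)
      grind
    · exact .inr hmF
  obtain hb | hd' := h.symm.coversLink_or_coversLink hC (by grind) hcy
  · refine hby (insert_comm b a {y} ▸ hC.mem_of_star hmem.2.1 hmem.1 hne.1.symm {b, d, c}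
      (fun F hF hbF ↦ ?_) (by grind) (by grind) (by grind))
    obtain ⟨m, hm, hmF⟩ := hb F hF hbF
    obtain rfl | rfl : m = a ∨ m = d := by simpa using hm
    · exact .inr hmF
    · obtain ⟨u, hu, huF⟩ := hd F hF hmF
      have := eq_triple (a := b) (b := m) (c := c) (hC.sized hF)
      grind
  · obtain ⟨m, hm, hm'⟩ := hd' _ hdcz (by simp)
    grind

lemma coversLink_right (h : IsBroom V 𝒻 a b c d) (hC : IsCritical V 𝒻) :
    CoversLink 𝒻 d {b, c} := by
  have hne := h.pairwise_ne hC.sized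
  have hmem := h.mem_ground hC.subset
  obtain ⟨y, hy, hcy⟩ := h.exists_leaf_mem hC
  obtain ⟨z, hz, hbz⟩ := h.symm.exists_leaf_mem hC
  obtain ⟨G, hG, hG'⟩ :=
    hC.exists_mem_mem_notMem h.abc h.abd h.acd (h.degree_le hC.sized hC.subset)
  obtain ⟨m, hm, hmG⟩ := h.coversLink_left hC G hG hG'.2.1
  have hbcd : {b, c, d} ∈ 𝒻 :=
    eq_triple (hC.sized hG) hG'.1 hG'.2.1 (c := d) (by grind) (by grind) (by grind) (by grind) ▸ hG
  obtain hb | hc | hd | htr := hC.coversLink_or_isTransversal hbcd ⟨_, h.abc, by grind⟩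
    ⟨_, h.abd, by grind⟩ ⟨_, h.acd, by grind⟩
  · obtain ⟨m, hm, hm'⟩ := hb _ hbz (by simp)
    grind
  · obtain ⟨m, hm, hm'⟩ := hc _ hcy (by simp)
    grind
  · exact hd
  · have hzda : {z, d, a} ∈ 𝒻 := by
      refine hC.mem_of_star (mem_sdiff.1 hz).1 hmem.2.2.2 (by grind) {z, b, a} (fun F hF hzF ↦ ?_)
        hmem.1 (by grind) (by grind)
      obtain ⟨m, hm, hmF⟩ := htr F hF
      have := h.coversLink_left hC F hF
      have := h.symm.coversLink_left hC F hF
      have := h.eq_of_mem_of_mem hC.sized (z := z) (by grind) hF hbz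
      grind
    obtain ⟨m, hm, hm'⟩ := h.covers _ hzda (by simp)
    grind

end IsBroom

lemma IsCritical.not_isBroom (hC : IsCritical V 𝒻) : ¬ IsBroom V 𝒻 a b c d := fun h ↦ by
  have hne := h.pairwise_ne hC.sized
  have hcov : ∀ p ∈ ({b, c, d} : Finset ℕ), ∀ z ∈ V \ {a, b, c, d}, ∀ w ∈ V \ {a, b, c, d},
      {p, z, w} ∉ 𝒻 := fun p hp z hz w hw e ↦ by
    have := h.coversLink_left hC _ e
    have := h.symm.coversLink_left hC _ e
    have := h.coversLink_right hC _ e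
    grind
  refine h.false_of_isLight hC (fun z hz e ↦ ?_) fun p hp z hz w hw e ↦ (hcov p hp z hz w hw e).elim
  obtain ⟨m, hm, hm'⟩ := h.coversLink_left hC _ e (by simp)
  grind

lemma IsCritical.exists_two_common (hC : IsCritical V 𝒻) (hv : v ∈ V) (hx : x ∈ V.erase v)
    (hy : y ∈ V.erase v) (hxy : x ≠ y) (hcov : CoversLink 𝒻 v {x, y}) :
    ∃ w₁ w₂, w₁ ≠ w₂ ∧ {v, x, w₁} ∈ 𝒻 ∧ {v, y, w₁} ∈ 𝒻 ∧ {v, x, w₂} ∈ 𝒻 ∧ {v, y, w₂} ∈ 𝒻 :=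
  (exists_two_common_or_isBroom hC.sized hC.subset hx hy hxy hcov
    (card_erase_of_mem hv ▸ hC.le_degree hv)).resolve_right fun ⟨_, h⟩ ↦ hC.not_isBroom h

lemma eq_of_mem_of_kite (h𝒻 : (𝒻 : Set (Finset ℕ)).Sized 3) (ha : IsTransversal 𝒻 {x, y, a})
    (hb : IsTransversal 𝒻 {x, y, b}) (hcd : IsTransversal 𝒻 {x, c, d}) (hab : a ≠ b)
    (hyc : y ≠ c) (hyd : y ≠ d) (hvW : v ∉ ({x, y, a, b, c, d} : Finset ℕ)) (hF : F ∈ 𝒻)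
    (hvF : v ∈ F) (hxF : x ∉ F) :
    F = {v, y, c} ∨ F = {v, y, d} ∨ F = {v, a, b} ∧ ¬ Disjoint {a, b} ({c, d} : Finset ℕ) := by
  simp only [mem_insert, mem_singleton, not_or] at hvW
  have ha' : y ∈ F ∨ a ∈ F := by simpa [hxF] using ha F hF
  have hb' : y ∈ F ∨ b ∈ F := by simpa [hxF] using hb F hF
  have hcd' : c ∈ F ∨ d ∈ F := by simpa [hxF] using hcd F hF
  by_cases hy : y ∈ F
  · exact hcd'.imp (eq_triple (h𝒻 hF) hvF hy · hvW.2.1 hvW.2.2.2.2.1 hyc)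
      fun hd ↦ .inl (eq_triple (h𝒻 hF) hvF hy hd hvW.2.1 hvW.2.2.2.2.2 hyd)
  · obtain rfl := eq_triple (h𝒻 hF) hvF (ha'.resolve_left hy) (hb'.resolve_left hy) hvW.2.2.1
      hvW.2.2.2.1 hab
    refine .inr (.inr ⟨rfl, not_disjoint_iff.2 ?_⟩)
    rcases hcd' with h | h
    · exact ⟨c, by grind⟩
    · exact ⟨d, by grind⟩

lemma exists_singleton_traces_of_kite (h𝒻 : (𝒻 : Set (Finset ℕ)).Sized 3) (ea : {x, y, a} ∈ 𝒻)
    (eb : {x, y, b} ∈ 𝒻) (ecd : {x, c, d} ∈ 𝒻) (ha : IsTransversal 𝒻 {x, y, a})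
    (hb : IsTransversal 𝒻 {x, y, b}) (hcd : IsTransversal 𝒻 {x, c, d}) (hab : a ≠ b)
    (hyc : y ≠ c) (hyd : y ≠ d) (hvW : v ∉ ({x, y, a, b, c, d} : Finset ℕ)) (hF : F ∈ 𝒻)
    (hvF : v ∈ F) (hxF : x ∉ F) :
    ∃ p q, F = {v, p, q} ∧
      (({p, q} : Finset ℕ) = {y, c} ∨ ({p, q} : Finset ℕ) = {y, d} ∨
        ({p, q} : Finset ℕ) = {a, b} ∧ ¬ Disjoint {a, b} ({c, d} : Finset ℕ)) ∧
      (∃ G ∈ 𝒻, v ∉ G ∧ p ∈ G ∧ q ∉ G) ∧ ∃ G ∈ 𝒻, v ∉ G ∧ p ∉ G ∧ q ∈ G := by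
  have hnea := ne_of_triple_mem h𝒻 ea
  have hneb := ne_of_triple_mem h𝒻 eb
  have hnecd := ne_of_triple_mem h𝒻 ecd
  have hy {t : ℕ} (hty : y ≠ t) (htx : x ≠ t) : ∃ G ∈ 𝒻, v ∉ G ∧ y ∈ G ∧ t ∉ G := by
    obtain rfl | hta := eq_or_ne t a
    · exact ⟨_, eb, by grind⟩
    · exact ⟨_, ea, by grind⟩
  obtain rfl | rfl | ⟨rfl, hdisj⟩ := eq_of_mem_of_kite h𝒻 ha hb hcd hab hyc hyd hvW hF hvF hxF
  · exact ⟨y, c, rfl, .inl rfl, hy hyc hnecd.1, _, ecd, by grind⟩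
  · exact ⟨y, d, rfl, .inr (.inl rfl), hy hyd hnecd.2.1, _, ecd, by grind⟩
  · exact ⟨a, b, rfl, .inr (.inr ⟨rfl, hdisj⟩), ⟨_, ea, by grind⟩, _, eb, by grind⟩

namespace IsCritical

lemma exists_mem_notMem (hC : IsCritical V 𝒻) {W : Finset ℕ} (hW : #W ≤ 7) : ∃ v ∈ V, v ∉ W :=
  exists_mem_notMem_of_card_lt_card (by have := hC.eight_le; omega)

lemma false_of_sunflower (hC : IsCritical V 𝒻) (hF : IsTransversal 𝒻 F)
    (hG : IsTransversal 𝒻 G) (hH : IsTransversal 𝒻 H) (hcard : #(F ∪ G ∪ H) ≤ 7) (hx : x ∈ V)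
    (hFG : F ∩ G = {x}) (hFH : F ∩ H = {x}) (hGH : G ∩ H = {x}) : False := by
  obtain ⟨v, hv, hvW⟩ := hC.exists_mem_notMem hcard
  simp only [Finset.ext_iff, mem_inter, mem_singleton] at hFG hFH hGH
  obtain ⟨E, hE, hvE, hxE, -⟩ := hC.exists_heavy_star_edge hv hx (by grind)
  obtain ⟨p, hp, hpE⟩ := hF E hE
  obtain ⟨q, hq, hqE⟩ := hG E hE
  obtain ⟨r, hr, hrE⟩ := hH E hE
  have := eq_triple (hC.sized hE) hvE hpE hqE
  grind

lemma false_of_triangle {p q r : ℕ} (hC : IsCritical V 𝒻) (ha : IsTransversal 𝒻 {p, q, a})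
    (hb : IsTransversal 𝒻 {p, r, b}) (hc : IsTransversal 𝒻 {q, r, c}) (hpq : p ≠ q)
    (hpr : p ≠ r) (hqr : q ≠ r) (hab : a ≠ b) (hac : a ≠ c) (hbc : b ≠ c) (har : a ≠ r)
    (hbq : b ≠ q) (hcp : c ≠ p) : False := by
  obtain ⟨v, hv, hvW⟩ := hC.exists_mem_notMem (card_le_six (a := p) (b := q) (c := r) (d := a)
    (e := b) (f := c) |>.trans (by omega))
  have hsub : {F ∈ 𝒻 | v ∈ F} ⊆
      {{v, p, q}, {v, p, r}, {v, q, r}, {v, p, c}, {v, q, b}, {v, r, a}} := fun F hF ↦ by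
    obtain ⟨hF, hvF⟩ := mem_filter.1 hF
    obtain ⟨i, hi, hiF⟩ := ha F hF
    obtain ⟨j, hj, hjF⟩ := hb F hF
    obtain ⟨k, hk, hkF⟩ := hc F hF
    have := eq_triple (hC.sized hF) hvF hiF hjF
    have := eq_triple (hC.sized hF) hvF hiF hkF
    have := eq_triple (hC.sized hF) hvF hjF hkF
    simp only [mem_insert, mem_singleton] at hi hj hk hvW ⊢
    grind
  have := (card_le_card hsub).trans card_le_six
  have := hC.le_degree hv
  have := hC.eight_le
  omega

lemma mem_of_tent (hC : IsCritical V 𝒻) (ha : IsTransversal 𝒻 {x, y, a})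
    (hb : IsTransversal 𝒻 {x, y, b}) (hz : IsTransversal 𝒻 {a, b, z}) (hxa : x ≠ a) (hxb : x ≠ b)
    (hxz : x ≠ z) (hya : y ≠ a) (hyb : y ≠ b) (hyz : y ≠ z) (hab : a ≠ b) (hv : v ∈ V)
    (hvW : v ∉ ({x, y, a, b, z} : Finset ℕ)) :
    {v, a, b} ∈ 𝒻 ∧ {v, x, a} ∈ 𝒻 ∧ {v, x, b} ∈ 𝒻 ∧ {v, y, b} ∈ 𝒻 := by
  have hsub : {F ∈ 𝒻 | v ∈ F} ⊆ {{v, a, b}, {v, x, a}, {v, x, b}, {v, y, b}, {v, x, z}, {v, y, a},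
      {v, y, z}} := fun F hF ↦ by
    obtain ⟨hF, hvF⟩ := mem_filter.1 hF
    obtain ⟨i, hi, hiF⟩ := ha F hF
    obtain ⟨j, hj, hjF⟩ := hb F hF
    obtain ⟨k, hk, hkF⟩ := hz F hF
    have := eq_triple (hC.sized hF) hvF hiF hjF
    have := eq_triple (hC.sized hF) hvF hiF hkF
    have := eq_triple (hC.sized hF) hvF hjF hkF
    simp only [mem_insert, mem_singleton] at hi hj hk hvW ⊢
    grind
  have hle : 7 ≤ #{F ∈ 𝒻 | v ∈ F} := (hC.le_degree hv).trans' (by have := hC.eight_le; omega)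
  have heq := eq_of_subset_of_card_le hsub <| hle.trans' <|
    (card_insert_le ..).trans (Nat.succ_le_succ card_le_six)
  have hall F (hF : F ∈ _) : F ∈ 𝒻 := (mem_filter.1 (heq.symm.subset hF)).1
  exact ⟨hall _ (by simp), hall _ (by simp), hall _ (by simp), hall _ (by simp)⟩

lemma false_of_tent (hC : IsCritical V 𝒻) (e : {x, y, a} ∈ 𝒻) (ha : IsTransversal 𝒻 {x, y, a})
    (hb : IsTransversal 𝒻 {x, y, b}) (hz : IsTransversal 𝒻 {a, b, z}) (hxb : x ≠ b)
    (hxz : x ≠ z) (hyb : y ≠ b) (hyz : y ≠ z) (hab : a ≠ b) : False := by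
  obtain ⟨hxy, hxa, hya⟩ := ne_of_triple_mem hC.sized e
  have hcard : #{x, y, a, b, z} ≤ 5 := card_le_five
  obtain ⟨v, hv, hvW⟩ := hC.exists_mem_notMem (hcard.trans (by omega))
  obtain ⟨w, hw, hwW⟩ := hC.exists_mem_notMem (W := insert v {x, y, a, b, z})
    ((card_insert_le ..).trans (by omega))
  obtain ⟨hvab, hvxa, hvxb, hvyb⟩ := hC.mem_of_tent ha hb hz hxa hxb hxz hya hyb hyz hab hv hvW
  obtain ⟨hwab, -, hwxb, hwyb⟩ := hC.mem_of_tent ha hb hz hxa hxb hxz hya hyb hyz hab hw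
    (notMem_mono (subset_insert ..) hwW)
  exact hC.not_shatters _ hvxa (shatters_triple ⟨_, hvxa, by simp⟩ ⟨_, hvxb, by grind⟩
    ⟨_, hvab, by grind⟩ ⟨_, e, by grind⟩ ⟨_, hvyb, by grind⟩ ⟨_, hwxb, by grind⟩
    ⟨_, hwab, by grind⟩ ⟨_, hwyb, by grind⟩)

lemma exists_common_ne_of_book (hC : IsCritical V 𝒻) (e : {a, b, c} ∈ 𝒻)
    (hpage : ∀ u ∈ ({a, b, c} : Finset ℕ), {x, y, u} ∈ 𝒻)
    (htr : ∀ u ∈ ({a, b, c} : Finset ℕ), IsTransversal 𝒻 {x, y, u}) (hv : v ∈ V)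
    (hvW : v ∉ ({x, y, a, b, c} : Finset ℕ)) (u : ℕ) :
    ∃ w ≠ u, {v, x, w} ∈ 𝒻 ∧ {v, y, w} ∈ 𝒻 := by
  have hne := ne_of_triple_mem hC.sized e
  have hmem := hC.triple_subset (hpage a (by simp))
  have hxy := (ne_of_triple_mem hC.sized (hpage a (by simp))).1
  obtain ⟨w₁, w₂, hw, h₁, h₁', h₂, h₂'⟩ := hC.exists_two_common hv (x := x) (y := y) (by grind)
    (by grind) hxy fun F hF hvF ↦ by
      have := eq_triple (a := a) (b := b) (c := c) (hC.sized hF)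
      have hmeet u hu := htr u hu F hF
      have := hmeet a
      have := hmeet b
      have := hmeet c
      grind
  obtain rfl | hu := eq_or_ne w₁ u
  · exact ⟨w₂, hw.symm, h₂, h₂'⟩
  · exact ⟨w₁, hu, h₁, h₁'⟩

lemma mem_of_common_of_book (hC : IsCritical V 𝒻) (e : {a, b, c} ∈ 𝒻)
    (hpage : ∀ u ∈ ({a, b, c} : Finset ℕ), {x, y, u} ∈ 𝒻)
    (htr : ∀ u ∈ ({a, b, c} : Finset ℕ), IsTransversal 𝒻 {x, y, u}) (hv : v ∈ V)
    (hvW : v ∉ ({x, y, a, b, c} : Finset ℕ)) (hx : {v, x, w} ∈ 𝒻) (hy : {v, y, w} ∈ 𝒻) :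
    w ∈ ({a, b, c} : Finset ℕ) := by
  by_contra hwabc
  have hw := (hC.triple_subset hx).2.2
  have hnex := ne_of_triple_mem hC.sized hx
  have hney := ne_of_triple_mem hC.sized hy
  have hne u hu := ne_of_triple_mem hC.sized (hpage u hu)
  have := hne a (by simp)
  obtain ⟨u, hu, hux, huy⟩ := hC.exists_common_ne_of_book e hpage htr hv hvW w
  obtain ⟨t, ht, htx, hty⟩ := hC.exists_common_ne_of_book e hpage htr hw (by grind) v
  have := ne_of_triple_mem hC.sized hux
  have := ne_of_triple_mem hC.sized htx
  have := ne_of_triple_mem hC.sized hty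
  exact hC.not_shatters _ hx (shatters_triple ⟨_, hx, by simp⟩ ⟨_, hux, by grind⟩
    ⟨_, hy, by grind⟩ ⟨_, htx, by grind⟩ ⟨_, huy, by grind⟩ ⟨_, hpage a (by simp), by grind⟩
    ⟨_, hty, by grind⟩ ⟨_, e, by grind⟩)

lemma false_of_book (hC : IsCritical V 𝒻) (e : {a, b, c} ∈ 𝒻)
    (hpage : ∀ u ∈ ({a, b, c} : Finset ℕ), {x, y, u} ∈ 𝒻)
    (htr : ∀ u ∈ ({a, b, c} : Finset ℕ), IsTransversal 𝒻 {x, y, u}) : False := by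
  have hcard : #{x, y, a, b, c} ≤ 5 := card_le_five
  obtain ⟨v, hv, hvW⟩ := hC.exists_mem_notMem (hcard.trans (by omega))
  obtain ⟨w, hw, hwW⟩ := hC.exists_mem_notMem (W := insert v {x, y, a, b, c})
    ((card_insert_le ..).trans (by omega))
  replace ⟨hwv, hwW⟩ := not_or.1 (mem_insert.not.1 hwW)
  obtain ⟨j, -, hjx, hjy⟩ := hC.exists_common_ne_of_book e hpage htr hv hvW v
  obtain ⟨k, hkj, hkx, hky⟩ := hC.exists_common_ne_of_book e hpage htr hv hvW j
  obtain ⟨l, hlj, hlx, hly⟩ := hC.exists_common_ne_of_book e hpage htr hw hwW j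
  have hj := hC.mem_of_common_of_book e hpage htr hv hvW hjx hjy
  have hk := hC.mem_of_common_of_book e hpage htr hv hvW hkx hky
  have hl := hC.mem_of_common_of_book e hpage htr hw hwW hlx hly
  have hne u hu := ne_of_triple_mem hC.sized (hpage u hu)
  have := hne a (by simp)
  exact hC.not_shatters _ hjx (shatters_triple ⟨_, hjx, by simp⟩ ⟨_, hkx, by grind⟩
    ⟨_, hjy, by grind⟩ ⟨_, hpage j hj, by grind⟩ ⟨_, hky, by grind⟩ ⟨_, hpage k hk, by grind⟩
    ⟨_, e, by grind⟩ ⟨_, hly, by grind⟩)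

lemma exists_mem_notMem_of_kite (hC : IsCritical V 𝒻) (ha : IsTransversal 𝒻 {x, y, a})
    (hb : IsTransversal 𝒻 {x, y, b}) (hcd : IsTransversal 𝒻 {x, c, d}) (hab : a ≠ b)
    (hyc : y ≠ c) (hyd : y ≠ d) (hv : v ∈ V) (hvW : v ∉ ({x, y, a, b, c, d} : Finset ℕ))
    {P : Finset ℕ} (hP : #P ≤ 3) : ∃ u ∉ P, {v, x, u} ∈ 𝒻 := by
  have hdeg := degree_le_of_star hC.sized (v := v) (x := x) (by grind)
    (X := {{v, y, c}, {v, y, d}, {v, a, b}}) fun F hF hvF ↦ by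
      have := eq_of_mem_of_kite hC.sized ha hb hcd hab hyc hyd hvW hF hvF
      grind
  have hthree : #({{v, y, c}, {v, y, d}, {v, a, b}} : Finset (Finset ℕ)) ≤ 3 := card_le_three
  have := hC.le_degree hv
  have := hC.eight_le
  obtain ⟨u, hu, huP⟩ := exists_mem_notMem_of_card_lt_card
    (show #P < #(completions 𝒻 v x) by omega)
  exact ⟨u, huP, mem_completions.1 hu⟩

lemma exists_isLight_of_kite (hC : IsCritical V 𝒻) (ea : {x, y, a} ∈ 𝒻) (eb : {x, y, b} ∈ 𝒻)
    (ecd : {x, c, d} ∈ 𝒻) (ha : IsTransversal 𝒻 {x, y, a}) (hb : IsTransversal 𝒻 {x, y, b})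
    (hcd : IsTransversal 𝒻 {x, c, d}) (hab : a ≠ b) (hyc : y ≠ c) (hyd : y ≠ d)
    (hv : v ∈ V) (hvW : v ∉ ({x, y, a, b, c, d} : Finset ℕ)) :
    ∃ P, (P = {y, c} ∨ P = {y, d} ∨ P = {a, b} ∧ ¬ Disjoint {a, b} ({c, d} : Finset ℕ)) ∧
      IsLight 𝒻 P ∧ insert v P ∈ 𝒻 := by
  obtain ⟨F, hF, hvF, hxF, hheavy⟩ :=
    hC.exists_heavy_star_edge hv (hC.triple_subset ea).1 (by grind)
  obtain ⟨p, q, rfl, hpq, hp, hq⟩ := exists_singleton_traces_of_kite hC.sized ea eb ecd ha hb hcd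
    hab hyc hyd hvW hF hvF hxF
  refine ⟨{p, q}, hpq, ?_, hF⟩
  by_contra hlight
  have hcard : #{x, y, a, b, c, d} ≤ 6 := card_le_six
  obtain ⟨w, hw, hwW⟩ := hC.exists_mem_notMem (W := insert v {x, y, a, b, c, d})
    ((card_insert_le ..).trans (by omega))
  replace ⟨hwv, hwW⟩ := not_or.1 (mem_insert.not.1 hwW)
  obtain ⟨u, hu, hvu⟩ := hC.exists_mem_notMem_of_kite ha hb hcd hab hyc hyd hv hvW
    (card_le_three (a := v) (b := p) (c := q))
  obtain ⟨t, ht, hwt⟩ := hC.exists_mem_notMem_of_kite ha hb hcd hab hyc hyd hw hwW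
    (card_le_three (a := v) (b := p) (c := q))
  have hne := ne_of_triple_mem hC.sized hF
  have hpqW : p ∈ ({x, y, a, b, c, d} : Finset ℕ) ∧ q ∈ ({x, y, a, b, c, d} : Finset ℕ) := by
    have hp : p ∈ ({p, q} : Finset ℕ) := by simp
    have hq : q ∈ ({p, q} : Finset ℕ) := by simp
    obtain h | h | ⟨h, -⟩ := hpq <;> rw [h] at hp hq <;> grind
  exact hC.not_shatters _ hF (shatters_of_not_isLight hC.sized hF (hheavy p (by simp) hne.1.symm)
    (hheavy q (by simp) hne.2.1.symm) hlight ⟨_, hvu, by grind⟩ hp hq ⟨_, hwt, by grind⟩)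

lemma exists_not_isLight_of_isTransversal (hC : IsCritical V 𝒻) (hx : x ∈ V) (hy : y ∈ V)
    (hxy : x ≠ y) (hyc : y ≠ c) (hyd : y ≠ d) (hcd : IsTransversal 𝒻 {x, c, d}) :
    ∃ t ∈ ({c, d} : Finset ℕ), ¬ IsLight 𝒻 {y, t} := by
  obtain ⟨F, hF, -, hxF, hheavy⟩ := hC.exists_heavy_star_edge hy hx hxy.symm
  obtain ⟨t, ht, htF⟩ := hcd F hF
  exact ⟨t, by grind, hheavy t htF (by grind)⟩

lemma card_sdiff_kite_le (hC : IsCritical V 𝒻) (ea : {x, y, a} ∈ 𝒻) (eb : {x, y, b} ∈ 𝒻)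
    (ecd : {x, c, d} ∈ 𝒻) (ha : IsTransversal 𝒻 {x, y, a}) (hb : IsTransversal 𝒻 {x, y, b})
    (hcd : IsTransversal 𝒻 {x, c, d}) (hab : a ≠ b) (hyc : y ≠ c) (hyd : y ≠ d)
    {𝒬 : Finset (Finset ℕ)} (h𝒬 : ∀ P, (P = {y, c} ∨ P = {y, d} ∨
      P = {a, b} ∧ ¬ Disjoint {a, b} ({c, d} : Finset ℕ)) → IsLight 𝒻 P → P ∈ 𝒬) :
    #(V \ {x, y, a, b, c, d}) ≤ #𝒬 := by
  refine card_le_card_of_forall_subsingleton (fun v P ↦ IsLight 𝒻 P ∧ v ∉ P ∧ insert v P ∈ 𝒻)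
    (fun v hv ↦ ?_) fun P _ v ⟨_, hlight, hvP, hv⟩ w ⟨_, _, _, hw⟩ ↦ ?_
  · obtain ⟨P, hP, hlight, hvP⟩ := hC.exists_isLight_of_kite ea eb ecd ha hb hcd hab hyc hyd
      (mem_sdiff.1 hv).1 (mem_sdiff.1 hv).2
    exact ⟨P, h𝒬 P hP hlight, hlight, by grind, hvP⟩
  · have heq := hlight.unique ⟨hv, subset_insert ..⟩ ⟨hw, subset_insert ..⟩
    exact (mem_insert.1 (heq ▸ mem_insert_self v P)).resolve_right hvP

lemma false_of_kite (hC : IsCritical V 𝒻) (ea : {x, y, a} ∈ 𝒻) (eb : {x, y, b} ∈ 𝒻)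
    (ecd : {x, c, d} ∈ 𝒻) (ha : IsTransversal 𝒻 {x, y, a}) (hb : IsTransversal 𝒻 {x, y, b})
    (hcd : IsTransversal 𝒻 {x, c, d}) (hab : a ≠ b) (hyc : y ≠ c) (hyd : y ≠ d) : False := by
  have hmem := hC.triple_subset ea
  obtain ⟨t, ht, hyt⟩ := hC.exists_not_isLight_of_isTransversal hmem.1 hmem.2.1
    (ne_of_triple_mem hC.sized ea).1 hyc hyd hcd
  set 𝒬 : Finset (Finset ℕ) := ({{y, c}, {y, d}} : Finset (Finset ℕ)).erase {y, t} with h𝒬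
  have hcard𝒬 : #𝒬 ≤ 1 := by
    rw [h𝒬, card_erase_of_mem (by grind)]
    exact Nat.sub_le_of_le_add card_le_two
  have hle := le_card_sdiff ({x, y, a, b, c, d} : Finset ℕ) V
  have hcardV := hC.eight_le
  by_cases hdisj : Disjoint {a, b} ({c, d} : Finset ℕ)
  · have hcount := hC.card_sdiff_kite_le ea eb ecd ha hb hcd hab hyc hyd (𝒬 := 𝒬)
      fun P hP hlight ↦ by grind
    have hsix : #({x, y, a, b, c, d} : Finset ℕ) ≤ 6 := card_le_six
    omega
  · have hcount := hC.card_sdiff_kite_le ea eb ecd ha hb hcd hab hyc hyd (𝒬 := insert {a, b} 𝒬)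
      fun P hP hlight ↦ by grind
    have hinsert := card_insert_le {a, b} 𝒬
    have hfive : #({x, y, a, b, c, d} : Finset ℕ) ≤ 5 := card_le_five_of_not_disjoint hdisj
    omega

end IsCritical

/-- A member of the family that meets all members, although no two of its points cover the link
of the third. A critical family has at most two blocking members. -/
structure IsBlocking (𝒻 : Finset (Finset ℕ)) (F : Finset ℕ) : Prop where
  mem : F ∈ 𝒻
  isTransversal : IsTransversal 𝒻 F
  not_coversLink : ∀ v ∈ F, ¬ CoversLink 𝒻 v (F.erase v)

namespace IsCritical

lemma not_isBlocking_of_mem_of_mem (hC : IsCritical V 𝒻) (ha : IsBlocking 𝒻 {x, y, a})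
    (hb : IsBlocking 𝒻 {x, y, b}) (hab : a ≠ b) (hx : x ∈ G) (hy : y ∈ G)
    (hGa : G ≠ {x, y, a}) (hGb : G ≠ {x, y, b}) : ¬ IsBlocking 𝒻 G := by
  intro hG
  have hnea := ne_of_triple_mem hC.sized ha.mem
  obtain ⟨c, rfl⟩ := exists_eq_triple_of_pair (hC.sized hG.mem) hx hy hnea.1
  have hlink := ha.not_coversLink a (by simp)
  simp only [CoversLink, not_forall, not_exists, not_and] at hlink
  obtain ⟨E, hE, haE, hxyE⟩ := hlink
  have hxE : x ∉ E := hxyE x (by grind)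
  have hyE : y ∉ E := hxyE y (by grind)
  obtain ⟨b', hb', hbE⟩ := hb.isTransversal E hE
  obtain ⟨c', hc', hcE⟩ := hG.isTransversal E hE
  obtain rfl : b' = b := by grind
  obtain rfl : c' = c := by grind
  obtain rfl := eq_triple (hC.sized hE) haE hbE hcE hab (by grind) (by grind)
  have hpage : ∀ u ∈ ({a, b', c'} : Finset ℕ), IsBlocking 𝒻 {x, y, u} := by
    simp only [mem_insert, mem_singleton, forall_eq_or_imp, forall_eq]
    exact ⟨ha, hb, hG⟩
  exact hC.false_of_book hE (fun u hu ↦ (hpage u hu).mem) fun u hu ↦ (hpage u hu).isTransversal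

lemma not_isBlocking_of_mem_of_notMem (hC : IsCritical V 𝒻) (ha : IsBlocking 𝒻 {x, y, a})
    (hb : IsBlocking 𝒻 {x, y, b}) (hab : a ≠ b) (hx : x ∈ G) (hy : y ∉ G) :
    ¬ IsBlocking 𝒻 G := by
  intro hG
  obtain ⟨c, d, rfl⟩ := exists_eq_triple (hC.sized hG.mem) hx
  exact hC.false_of_kite ha.mem hb.mem hG.mem ha.isTransversal hb.isTransversal
    hG.isTransversal hab (by grind) (by grind)

lemma not_isBlocking_of_notMem_of_notMem (hC : IsCritical V 𝒻) (ha : IsBlocking 𝒻 {x, y, a})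
    (hb : IsBlocking 𝒻 {x, y, b}) (hab : a ≠ b) (hx : x ∉ G) (hy : y ∉ G) :
    ¬ IsBlocking 𝒻 G := by
  intro hG
  obtain ⟨a', ha', haG⟩ := ha.isTransversal G hG.mem
  obtain ⟨b', hb', hbG⟩ := hb.isTransversal G hG.mem
  obtain rfl : a' = a := by grind
  obtain rfl : b' = b := by grind
  obtain ⟨z, rfl⟩ := exists_eq_triple_of_pair (hC.sized hG.mem) haG hbG hab
  exact hC.false_of_tent ha.mem ha.isTransversal hb.isTransversal hG.isTransversal
    (by grind) (by grind) (by grind) (by grind) hab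

lemma eq_of_mem_inter_of_isBlocking (hC : IsCritical V 𝒻) (hF : IsBlocking 𝒻 F)
    (hG : IsBlocking 𝒻 G) (hH : IsBlocking 𝒻 H) (hFG : F ≠ G) (hFH : F ≠ H) (hGH : G ≠ H)
    (hx : x ∈ F ∩ G) (hy : y ∈ F ∩ G) : x = y := by
  by_contra hxy
  obtain ⟨a, rfl⟩ := exists_eq_triple_of_pair (hC.sized hF.mem) (mem_inter.1 hx).1
    (mem_inter.1 hy).1 hxy
  obtain ⟨b, rfl⟩ := exists_eq_triple_of_pair (hC.sized hG.mem) (mem_inter.1 hx).2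
    (mem_inter.1 hy).2 hxy
  have hab : a ≠ b := by grind
  by_cases hxH : x ∈ H <;> by_cases hyH : y ∈ H
  · exact hC.not_isBlocking_of_mem_of_mem hF hG hab hxH hyH hFH.symm hGH.symm hH
  · exact hC.not_isBlocking_of_mem_of_notMem hF hG hab hxH hyH hH
  · rw [insert_comm] at hF hG
    exact hC.not_isBlocking_of_mem_of_notMem hF hG hab hyH hxH hH
  · exact hC.not_isBlocking_of_notMem_of_notMem hF hG hab hxH hyH hH

lemma exists_inter_eq_singleton_of_isBlocking (hC : IsCritical V 𝒻) (hF : IsBlocking 𝒻 F)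
    (hG : IsBlocking 𝒻 G) (hH : IsBlocking 𝒻 H) (hFG : F ≠ G) (hFH : F ≠ H) (hGH : G ≠ H) :
    ∃ p, F ∩ G = {p} := by
  obtain ⟨p, hpF, hpG⟩ := hF.isTransversal G hG.mem
  exact ⟨p, eq_singleton_iff_unique_mem.2 ⟨mem_inter.2 ⟨hpF, hpG⟩, fun q hq ↦
    hC.eq_of_mem_inter_of_isBlocking hF hG hH hFG hFH hGH hq (mem_inter.2 ⟨hpF, hpG⟩)⟩⟩

lemma not_three_isBlocking (hC : IsCritical V 𝒻) (hF : IsBlocking 𝒻 F)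
    (hG : IsBlocking 𝒻 G) (hH : IsBlocking 𝒻 H) (hFG : F ≠ G) (hFH : F ≠ H) (hGH : G ≠ H) :
    False := by
  obtain ⟨p, hp⟩ := hC.exists_inter_eq_singleton_of_isBlocking hF hG hH hFG hFH hGH
  obtain ⟨q, hq⟩ := hC.exists_inter_eq_singleton_of_isBlocking hF hH hG hFH hFG hGH.symm
  obtain ⟨r, hr⟩ := hC.exists_inter_eq_singleton_of_isBlocking hG hH hF hGH hFG.symm hFH.symm
  obtain ⟨hpF, hpG⟩ := mem_inter.1 (hp ▸ mem_singleton_self p)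
  obtain ⟨hqF, hqH⟩ := mem_inter.1 (hq ▸ mem_singleton_self q)
  obtain ⟨hrG, hrH⟩ := mem_inter.1 (hr ▸ mem_singleton_self r)
  have hpuniq (t : ℕ) (hF : t ∈ F) (hG : t ∈ G) : t = p :=
    mem_singleton.1 (hp ▸ mem_inter.2 ⟨hF, hG⟩)
  have hquniq (t : ℕ) (hF : t ∈ F) (hH : t ∈ H) : t = q :=
    mem_singleton.1 (hq ▸ mem_inter.2 ⟨hF, hH⟩)
  have hruniq (t : ℕ) (hG : t ∈ G) (hH : t ∈ H) : t = r :=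
    mem_singleton.1 (hr ▸ mem_inter.2 ⟨hG, hH⟩)
  obtain rfl | hpq := eq_or_ne p q
  · obtain rfl := hruniq p hpG hqH
    exact hC.false_of_sunflower hF.isTransversal hG.isTransversal hH.isTransversal
      (card_union_le_seven (hC.sized hF.mem) (hC.sized hG.mem) (hC.sized hH.mem) hp hq)
      (hC.subset F hF.mem hpF) hp hq hr
  · have hpr : p ≠ r := by grind
    have hqr : q ≠ r := by grind
    obtain ⟨a, rfl⟩ := exists_eq_triple_of_pair (hC.sized hF.mem) hpF hqF hpq
    obtain ⟨b, rfl⟩ := exists_eq_triple_of_pair (hC.sized hG.mem) hpG hrG hpr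
    obtain ⟨c, rfl⟩ := exists_eq_triple_of_pair (hC.sized hH.mem) hqH hrH hqr
    have hnea := ne_of_triple_mem hC.sized hF.mem
    have hneb := ne_of_triple_mem hC.sized hG.mem
    have hnec := ne_of_triple_mem hC.sized hH.mem
    have ha : a ≠ r ∧ a ≠ b ∧ a ≠ c := by grind
    have hb : b ≠ q ∧ b ≠ c := by grind
    have hc : c ≠ p := by grind
    exact hC.false_of_triangle hF.isTransversal hG.isTransversal hH.isTransversal hpq hpr hqr
      ha.2.1 ha.2.2 hb.2 ha.1 hb.1 hc

end IsCritical

open Classical in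
/-- The pairs of points of `V` that do not lie in exactly one member of `𝒻`. -/
noncomputable def heavyPairs (V : Finset ℕ) (𝒻 : Finset (Finset ℕ)) : Finset (Finset ℕ) :=
  {P ∈ V.powersetCard 2 | ¬ IsLight 𝒻 P}

lemma card_le_card_heavyPairs {W : Finset ℕ} (hv : v ∈ V) (hW : W ⊆ V.erase v)
    (hheavy : ∀ w ∈ W, ¬ IsLight 𝒻 {v, w}) : #W ≤ #{P ∈ heavyPairs V 𝒻 | v ∈ P} := by
  refine card_le_card_of_injOn (fun w ↦ {v, w}) (fun w hw ↦ ?_) fun w hw w' _ h ↦ ?_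
  · obtain ⟨hwv, hwV⟩ := mem_erase.1 (hW hw)
    simp [heavyPairs, mem_powersetCard, insert_subset_iff, hv, hwV, card_pair hwv.symm,
      hheavy w hw]
  · have hmem : w ∈ ({v, w'} : Finset ℕ) := by simp [← show ({v, w} : Finset ℕ) = {v, w'} from h]
    simpa [ne_of_mem_erase (hW hw)] using hmem

lemma sum_card_heavyPairs (V : Finset ℕ) (𝒻 : Finset (Finset ℕ)) :
    ∑ v ∈ V, #{P ∈ heavyPairs V 𝒻 | v ∈ P} = #(heavyPairs V 𝒻) * 2 := by
  classical
  refine (sum_card_bipartiteAbove_eq_sum_card_bipartiteBelow fun v P ↦ v ∈ P).trans ?_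
  refine sum_const_nat fun P hP ↦ ?_
  obtain ⟨hP, hcard⟩ := mem_powersetCard.1 (mem_filter.1 hP).1
  rw [bipartiteBelow, filter_mem_eq_inter, inter_eq_right.2 hP, hcard]

namespace IsCritical

lemma three_le_card_heavyPairs (hC : IsCritical V 𝒻) (hv : v ∈ V) :
    3 ≤ #{P ∈ heavyPairs V 𝒻 | v ∈ P} := by
  have hcardV := hC.eight_le
  obtain ⟨x, hx, hxv⟩ := exists_mem_ne (show 1 < #V by omega) v
  obtain ⟨F, hF, -, -, hFheavy⟩ := hC.exists_heavy_star_edge hv hx hxv.symm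
  obtain ⟨p, hpF, hpv⟩ := exists_mem_ne (show 1 < #F by rw [hC.sized hF]; omega) v
  have hpV := hC.subset F hF hpF
  obtain ⟨G, hG, hvG, hpG, hGheavy⟩ := hC.exists_heavy_star_edge hv hpV hpv.symm
  rw [← show #(insert p (G.erase v)) = 3 by
    rw [card_insert_of_notMem (by grind), card_erase_of_mem hvG, hC.sized hG]]
  refine card_le_card_heavyPairs hv (insert_subset (mem_erase.2 ⟨hpv, hpV⟩)
    (erase_subset_erase v (hC.subset G hG))) fun w hw ↦ ?_
  obtain rfl | hw := mem_insert.1 hw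
  · exact hFheavy w hpF hpv
  · exact hGheavy w (mem_of_mem_erase hw) (ne_of_mem_erase hw)

lemma exists_eq_triple_two_common (hC : IsCritical V 𝒻) (hF : F ∈ 𝒻) (hv : v ∈ F)
    (hcov : CoversLink 𝒻 v (F.erase v)) : ∃ x y w₁ w₂, F = {v, x, y} ∧ w₁ ≠ w₂ ∧
      {v, x, w₁} ∈ 𝒻 ∧ {v, y, w₁} ∈ 𝒻 ∧ {v, x, w₂} ∈ 𝒻 ∧ {v, y, w₂} ∈ 𝒻 := by
  obtain ⟨x, y, rfl⟩ := exists_eq_triple (hC.sized hF) hv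
  have hne := ne_of_triple_mem hC.sized hF
  have hmem := hC.triple_subset hF
  rw [erase_insert (by simp [hne])] at hcov
  obtain ⟨w₁, w₂, h⟩ := hC.exists_two_common hmem.1 (mem_erase.2 ⟨hne.1.symm, hmem.2.1⟩)
    (mem_erase.2 ⟨hne.2.1.symm, hmem.2.2⟩) hne.2.2 hcov
  exact ⟨x, y, w₁, w₂, rfl, h⟩

lemma four_le_card_heavyPairs (hC : IsCritical V 𝒻) (hF : F ∈ 𝒻) (hv : v ∈ F)
    (hcov : CoversLink 𝒻 v (F.erase v)) : 4 ≤ #{P ∈ heavyPairs V 𝒻 | v ∈ P} := by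
  obtain ⟨x, y, w₁, w₂, rfl, hw, hx₁, hy₁, hx₂, hy₂⟩ :=
    hC.exists_eq_triple_two_common hF hv hcov
  have hxy := ne_of_triple_mem hC.sized hF
  have hnex₁ := ne_of_triple_mem hC.sized hx₁
  have hney₁ := ne_of_triple_mem hC.sized hy₁
  have hnex₂ := ne_of_triple_mem hC.sized hx₂
  have hney₂ := ne_of_triple_mem hC.sized hy₂
  have hmem₁ := hC.triple_subset hx₁
  have hmem₂ := hC.triple_subset hy₂
  rw [← show #{x, y, w₁, w₂} = 4 by
    rw [card_insert_of_notMem, card_insert_of_notMem, card_pair hw] <;> grind]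
  have hsub : {x, y, w₁, w₂} ⊆ V.erase v := by
    simp only [insert_subset_iff, singleton_subset_iff, mem_erase]
    grind
  refine card_le_card_heavyPairs hmem₁.1 hsub ?_
  simp only [mem_insert, mem_singleton, forall_eq_or_imp, forall_eq]
  refine ⟨not_isLight_of_triple_mem hC.sized hx₁ hx₂ hw,
    not_isLight_of_triple_mem hC.sized hy₁ hy₂ hw, ?_, ?_⟩
  · rw [pair_comm x] at hx₁
    rw [pair_comm y] at hy₁
    exact not_isLight_of_triple_mem hC.sized hx₁ hy₁ hxy.2.2
  · rw [pair_comm x] at hx₂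
    rw [pair_comm y] at hy₂
    exact not_isLight_of_triple_mem hC.sized hx₂ hy₂ hxy.2.2

lemma eq_of_coversLink (hC : IsCritical V 𝒻) (hF : F ∈ 𝒻) (hG : G ∈ 𝒻) (hvF : v ∈ F)
    (hvG : v ∈ G) (hcovF : CoversLink 𝒻 v (F.erase v)) (hcovG : CoversLink 𝒻 v (G.erase v)) :
    F = G := by
  obtain ⟨x, y, w₁, w₂, rfl, hw, hx₁, hy₁, hx₂, hy₂⟩ :=
    hC.exists_eq_triple_two_common hF hvF hcovF
  obtain ⟨p, q, rfl⟩ := exists_eq_triple (hC.sized hG) hvG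
  have hxy := ne_of_triple_mem hC.sized hF
  have hnex₁ := ne_of_triple_mem hC.sized hx₁
  have hney₁ := ne_of_triple_mem hC.sized hy₁
  have hnex₂ := ne_of_triple_mem hC.sized hx₂
  have hney₂ := ne_of_triple_mem hC.sized hy₂
  obtain ⟨t, ht, htF⟩ := hcovG _ hF hvF
  obtain ⟨t₁, ht₁, htx₁⟩ := hcovG _ hx₁ (by simp)
  obtain ⟨s₁, hs₁, hsy₁⟩ := hcovG _ hy₁ (by simp)
  obtain ⟨t₂, ht₂, htx₂⟩ := hcovG _ hx₂ (by simp)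
  obtain ⟨s₂, hs₂, hsy₂⟩ := hcovG _ hy₂ (by simp)
  obtain ⟨rfl, rfl⟩ | ⟨rfl, rfl⟩ : p = x ∧ q = y ∨ p = y ∧ q = x := by grind
  · rfl
  · rw [pair_comm]

lemma isLight_or_coversLink_or_isBlocking (hC : IsCritical V 𝒻) (hF : F ∈ 𝒻) :
    (∃ P ∈ V.powersetCard 2, IsLight 𝒻 P ∧ P ⊆ F) ∨ (∃ v ∈ F, CoversLink 𝒻 v (F.erase v)) ∨
      IsBlocking 𝒻 F := by
  by_contra! ⟨hlight, hcov, hblock⟩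
  have hheavy {x y : ℕ} (hx : x ∈ F) (hy : y ∈ F) (hxy : x ≠ y) : ¬ IsLight 𝒻 {x, y} := by
    have hsub : {x, y} ⊆ F := by simp [insert_subset_iff, hx, hy]
    exact fun h ↦ hlight {x, y}
      (mem_powersetCard.2 ⟨hsub.trans (hC.subset F hF), card_pair hxy⟩) h hsub
  obtain ⟨a, b, c, hab, hac, hbc, rfl⟩ := card_eq_three.1 (hC.sized hF)
  have hF' : {a, c, b} ∈ 𝒻 := by rwa [pair_comm c]
  have hF'' : {b, c, a} ∈ 𝒻 := by rwa [pair_comm c, insert_comm]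
  obtain ⟨G, hG, haG, hcG, hbG⟩ :=
    exists_notMem_of_not_isLight hC.sized hF' (hheavy (by simp) (by simp) hac)
  obtain ⟨H, hH, hbH, hcH, haH⟩ :=
    exists_notMem_of_not_isLight hC.sized hF'' (hheavy (by simp) (by simp) hbc)
  obtain h | h | h | h := hC.coversLink_or_isTransversal hF
    (exists_notMem_of_not_isLight hC.sized hF (hheavy (by simp) (by simp) hab))
    ⟨G, hG, haG, hbG, hcG⟩ ⟨H, hH, haH, hbH, hcH⟩
  · exact hcov a (by simp) (by convert h using 1; grind)
  · exact hcov b (by simp) (by convert h using 1; grind)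
  · exact hcov c (by simp) (by convert h using 1; grind)
  · exact hblock ⟨hF, h, hcov⟩

open Classical in
lemma card_filter_coversLink_le (hC : IsCritical V 𝒻) :
    #{F ∈ 𝒻 | ∃ v ∈ F, CoversLink 𝒻 v (F.erase v)} ≤
      #{v ∈ V | ∃ F ∈ 𝒻, v ∈ F ∧ CoversLink 𝒻 v (F.erase v)} := by
  refine card_le_card_of_forall_subsingleton (fun F v ↦ v ∈ F ∧ CoversLink 𝒻 v (F.erase v))
    (fun F hF ↦ ?_) fun v _ F ⟨hF, hvF, hcovF⟩ G ⟨hG, hvG, hcovG⟩ ↦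
      hC.eq_of_coversLink (mem_filter.1 hF).1 (mem_filter.1 hG).1 hvF hvG hcovF hcovG
  obtain ⟨hF, v, hv, hcov⟩ := mem_filter.1 hF
  exact ⟨v, mem_filter.2 ⟨hC.subset F hF hv, F, hF, hv, hcov⟩, hv, hcov⟩

open Classical in
lemma card_filter_isBlocking_le (hC : IsCritical V 𝒻) : #{F ∈ 𝒻 | IsBlocking 𝒻 F} ≤ 2 := by
  by_contra! h
  obtain ⟨F, hF, G, hG, H, hH, hFG, hFH, hGH⟩ := two_lt_card.1 h
  exact hC.not_three_isBlocking (mem_filter.1 hF).2 (mem_filter.1 hG).2 (mem_filter.1 hH).2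
    hFG hFH hGH

open Classical in
lemma card_add_card_le_card_heavyPairs (hC : IsCritical V 𝒻) :
    3 * #V + #{v ∈ V | ∃ F ∈ 𝒻, v ∈ F ∧ CoversLink 𝒻 v (F.erase v)} ≤ #(heavyPairs V 𝒻) * 2 := by
  rw [← sum_card_heavyPairs, card_filter, mul_comm, ← smul_eq_mul, ← sum_const, ← sum_add_distrib]
  refine sum_le_sum fun v hv ↦ ?_
  split_ifs with h
  · obtain ⟨F, hF, hvF, hcov⟩ := h
    exact hC.four_le_card_heavyPairs hF hvF hcov
  · exact hC.three_le_card_heavyPairs hv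

lemma false (hC : IsCritical V 𝒻) : False := by
  classical
  have hcover : 𝒻 ⊆ {F ∈ 𝒻 | ∃ P ∈ V.powersetCard 2, IsLight 𝒻 P ∧ P ⊆ F} ∪
      ({F ∈ 𝒻 | ∃ v ∈ F, CoversLink 𝒻 v (F.erase v)} ∪ {F ∈ 𝒻 | IsBlocking 𝒻 F}) :=
    fun F hF ↦ by simpa [hF] using hC.isLight_or_coversLink_or_isBlocking hF
  have hcard := (card_le_card hcover).trans <| (card_union_le ..).trans <|
    Nat.add_le_add (card_filter_isLight_le (𝒻 := 𝒻) (V.powersetCard 2)) <|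
      (card_union_le ..).trans (Nat.add_le_add hC.card_filter_coversLink_le
        hC.card_filter_isBlocking_le)
  have hpairs : #{P ∈ V.powersetCard 2 | IsLight 𝒻 P} + #(heavyPairs V 𝒻) = (#V).choose 2 := by
    rw [← card_powersetCard]
    exact card_filter_add_card_filter_not _
  have hheavy := hC.card_add_card_le_card_heavyPairs
  have hcovered : #{v ∈ V | ∃ F ∈ 𝒻, v ∈ F ∧ CoversLink 𝒻 v (F.erase v)} ≤ #V :=
    card_filter_le ..
  have hsize := hC.size
  have height := hC.eight_le
  have hchoose : (#V).choose 2 = #V - 1 + (#V - 1).choose 2 := by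
    simpa using Nat.choose_eq_choose_pred_add (show 0 < #V by omega) two_pos
  omega

end IsCritical

/-- Induction step: let `n ≥ 8`. If every family of 3-element subsets of an
`(n-1)`-element ground set that shatters no 3-element set has size at most
`C(n-2,2) + 1`, then every family of 3-element subsets of `[n]` that shatters no
3-element subset has size at most `C(n-1,2) + 1`. -/
theorem stmt_5 (n : ℕ) (hn : 8 ≤ n)
    (ih : ∀ (V : Finset ℕ) (𝒢 : Finset (Finset ℕ)), V.card = n - 1 →
      (∀ G ∈ 𝒢, G ⊆ V) → (∀ G ∈ 𝒢, G.card = 3) →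
      (∀ S ⊆ V, S.card = 3 → ¬ Shatters 𝒢 S) →
      𝒢.card ≤ (n - 2).choose 2 + 1)
    (𝒻 : Finset (Finset ℕ))
    (hsub : ∀ F ∈ 𝒻, F ⊆ Finset.Icc 1 n) (hcard : ∀ F ∈ 𝒻, F.card = 3)
    (hVC : ∀ S ⊆ Finset.Icc 1 n, S.card = 3 → ¬ Shatters 𝒻 S) :
    𝒻.card ≤ (n - 1).choose 2 + 1 := by
  by_contra! hlt
  have hC : IsCritical (Finset.Icc 1 n) 𝒻 :=
    { toIsAdmissible := isAdmissible_iff.2 ⟨hsub, hcard, hVC⟩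
      eight_le := by simpa using hn
      size := by rwa [Nat.card_Icc, Nat.add_sub_cancel]
      bound := fun v hv 𝒢 h𝒢 ↦ by
        obtain ⟨hsub', hcard', hVC'⟩ := isAdmissible_iff.1 h𝒢
        simpa using ih _ 𝒢 (by simp [Finset.card_erase_of_mem hv]) hsub' hcard' hVC' }
  exact hC.false
end

section
/- Let n ≥ 8 and let 𝒻 be a family of 3-element subsets of [n], and let x ∈ [n] satisfy |𝒻(x)| ≥ n − 1. Then the number of sets F_i ∈ 𝒻 with x ∈ F_i such that G ∩ F_i ≠ {x} for every G ∈ 𝒻 (i.e., {x} is a witness of F_i) is at most 2. -/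
/-!
Deleting `x` from the members of `𝒻` through `x` yields the edge set of a graph on the remaining
`n - 1` points, in which the members with witness `{x}` become the edges meeting every edge. Suppose
there were three such edges. Any edge meets all three, so by pigeonhole it contains a point lying on
two of them. Hence either the three edges share a vertex, and then every edge passes through it, or
they form a triangle and there are no further edges. The first alternative leaves at most `n - 2`
edges and the second only three, so `n - 1` edges are too many for both.
-/

open Finset

section SetFamilies

variable {α : Type*}

lemma exists_ne_mem_inter_of_card_lt {𝒯 : Finset (Finset α)} {E : Finset α} (hlt : #E < #𝒯)
    (hmeet : ∀ T ∈ 𝒯, ¬Disjoint E T) : ∃ S ∈ 𝒯, ∃ T ∈ 𝒯, S ≠ T ∧ ∃ y ∈ E, y ∈ S ∧ y ∈ T := by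
  simp only [not_disjoint_iff] at hmeet
  by_contra! hunique
  refine hlt.not_ge (card_le_card_of_forall_subsingleton (fun T y => y ∈ T) hmeet ?_)
  rintro y hy S ⟨hS, hyS⟩ T ⟨hT, hyT⟩
  by_contra hST
  exact hunique S hS T hT hST y hy hyS hyT

lemma card_le_choose_of_forall_superset {𝒢 : Finset (Finset α)} {V W : Finset α} {r : ℕ}
    (hsub : ∀ E ∈ 𝒢, E ⊆ V) (hcard : ∀ E ∈ 𝒢, #E = r) (hsup : ∀ E ∈ 𝒢, W ⊆ E) :
    #𝒢 ≤ (#V - #W).choose (r - #W) := by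
  obtain rfl | ⟨E₀, hE₀⟩ := 𝒢.eq_empty_or_nonempty
  · simp
  classical
  have hWV : W ⊆ V := (hsup E₀ hE₀).trans (hsub E₀ hE₀)
  have hmaps : ∀ E ∈ 𝒢, E \ W ∈ powersetCard (r - #W) (V \ W) := fun E hE =>
    mem_powersetCard.2 ⟨sdiff_subset_sdiff (hsub E hE) subset_rfl,
      by rw [card_sdiff_of_subset (hsup E hE), hcard E hE]⟩
  have hinj : Set.InjOn (· \ W) (𝒢 : Set (Finset α)) := (superset_injOn_sdiff W).mono hsup
  simpa [card_sdiff_of_subset hWV] using card_le_card_of_injOn _ hmaps hinj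

variable [DecidableEq α]

/-- The members of `𝒢` that are transversals (hitting sets) of `𝒢`; when the members of `𝒢` are
the edges of a graph, these are the edges meeting every edge. -/
def transversalMembers (𝒢 : Finset (Finset α)) : Finset (Finset α) :=
  {T ∈ 𝒢 | ∀ E ∈ 𝒢, ¬Disjoint E T}

lemma eq_pair_of_card_eq_two {E : Finset α} {y z : α} (hE : #E = 2) (hy : y ∈ E) (hz : z ∈ E)
    (hyz : y ≠ z) : E = {y, z} :=
  (eq_of_subset_of_card_le (by simp [insert_subset_iff, hy, hz]) (by rw [hE, card_pair hyz])).symm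

lemma eq_of_mem_inter_of_card_eq_two {S T : Finset α} {y z : α} (hS : #S = 2) (hT : #T = 2)
    (hST : S ≠ T) (hy : y ∈ S ∩ T) (hz : z ∈ S ∩ T) : y = z := by
  rw [mem_inter] at hy hz
  by_contra hyz
  exact hST ((eq_pair_of_card_eq_two hS hy.1 hz.1 hyz).trans
    (eq_pair_of_card_eq_two hT hy.2 hz.2 hyz).symm)

lemma subset_union_of_triangle {S T U : Finset α} {y : α} (hS : #S = 2) (hT : #T = 2) (hU : #U = 2)
    (hST : S ≠ T) (hy : y ∈ S ∩ T) (hyU : y ∉ U) (hSU : ¬Disjoint S U) (hTU : ¬Disjoint T U) :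
    U ⊆ S ∪ T := by
  obtain ⟨s, hsS, hsU⟩ := not_disjoint_iff.1 hSU
  obtain ⟨t, htT, htU⟩ := not_disjoint_iff.1 hTU
  have hst : s ≠ t := by
    rintro rfl
    exact hyU (eq_of_mem_inter_of_card_eq_two hS hT hST hy (mem_inter.2 ⟨hsS, htT⟩) ▸ hsU)
  rw [eq_pair_of_card_eq_two hU hsU htU hst]
  simp [insert_subset_iff, hsS, htT]

lemma eq_or_eq_of_subset_union {S T U E : Finset α} {y : α} (hS : #S = 2) (hT : #T = 2)
    (hE : #E = 2) (hy : y ∈ S ∩ T) (hyU : y ∉ U) (hUST : U ⊆ S ∪ T) (hyE : y ∈ E)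
    (hEU : ¬Disjoint E U) : E = S ∨ E = T := by
  rw [mem_inter] at hy
  obtain ⟨z, hzE, hzU⟩ := not_disjoint_iff.1 hEU
  have hyz : y ≠ z := fun h => hyU (h ▸ hzU)
  rw [eq_pair_of_card_eq_two hE hyE hzE hyz]
  exact (mem_union.1 (hUST hzU)).imp
    (fun hzS => (eq_pair_of_card_eq_two hS hy.1 hzS hyz).symm)
    (fun hzT => (eq_pair_of_card_eq_two hT hy.2 hzT hyz).symm)

lemma exists_forall_mem_or_subset_of_three_transversals {𝒢 𝒯 : Finset (Finset α)}
    (hcard : ∀ E ∈ 𝒢, #E = 2) (h𝒯 : 𝒯 ⊆ transversalMembers 𝒢) (hlt : 2 < #𝒯) :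
    (∃ v, ∀ E ∈ 𝒢, v ∈ E) ∨ 𝒢 ⊆ 𝒯 := by
  have hmem : ∀ T ∈ 𝒯, T ∈ 𝒢 := fun T hT => (mem_filter.1 (h𝒯 hT)).1
  have hmeet : ∀ E ∈ 𝒢, ∀ T ∈ 𝒯, ¬Disjoint E T := fun E hE T hT => (mem_filter.1 (h𝒯 hT)).2 E hE
  have hcard𝒯 : ∀ T ∈ 𝒯, #T = 2 := fun T hT => hcard T (hmem T hT)
  have hdouble : ∀ E ∈ 𝒢, ∃ S ∈ 𝒯, ∃ T ∈ 𝒯, S ≠ T ∧ ∃ y ∈ E, y ∈ S ∧ y ∈ T := fun E hE =>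
    exists_ne_mem_inter_of_card_lt (hcard E hE ▸ hlt) (hmeet E hE)
  by_cases hstar : ∃ v, ∀ T ∈ 𝒯, v ∈ T
  · obtain ⟨v, hv⟩ := hstar
    refine .inl ⟨v, fun E hE => ?_⟩
    obtain ⟨S, hS, T, hT, hST, y, hyE, hyS, hyT⟩ := hdouble E hE
    have hyv : y = v := eq_of_mem_inter_of_card_eq_two (hcard𝒯 S hS) (hcard𝒯 T hT) hST
      (mem_inter.2 ⟨hyS, hyT⟩) (mem_inter.2 ⟨hv S hS, hv T hT⟩)
    exact hyv ▸ hyE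
  · push Not at hstar
    refine .inr fun E hE => ?_
    obtain ⟨S, hS, T, hT, hST, y, hyE, hyST⟩ := hdouble E hE
    obtain ⟨U, hU, hyU⟩ := hstar y
    have hUST : U ⊆ S ∪ T := subset_union_of_triangle (hcard𝒯 S hS) (hcard𝒯 T hT) (hcard𝒯 U hU)
      hST (mem_inter.2 hyST) hyU (hmeet S (hmem S hS) U hU) (hmeet T (hmem T hT) U hU)
    obtain rfl | rfl := eq_or_eq_of_subset_union (hcard𝒯 S hS) (hcard𝒯 T hT) (hcard E hE)
      (mem_inter.2 hyST) hyU hUST hyE (hmeet E hE U hU)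
    exacts [hS, hT]

theorem card_transversalMembers_le_two {𝒢 : Finset (Finset α)} {V : Finset α}
    (hsub : ∀ E ∈ 𝒢, E ⊆ V) (hcard : ∀ E ∈ 𝒢, #E = 2) (hV : #V ≤ #𝒢) (hlt : 3 < #𝒢) :
    #(transversalMembers 𝒢) ≤ 2 := by
  by_contra! hthree
  obtain ⟨𝒯, h𝒯, h𝒯card⟩ := exists_subset_card_eq hthree
  obtain ⟨v, hv⟩ | h𝒢𝒯 := exists_forall_mem_or_subset_of_three_transversals hcard h𝒯 (by omega)
  · have hstar : #𝒢 ≤ (#V - #{v}).choose (2 - #{v}) :=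
      card_le_choose_of_forall_superset hsub hcard fun E hE => singleton_subset_iff.2 (hv E hE)
    rw [card_singleton, Nat.choose_one_right] at hstar
    omega
  · have htriangle : #𝒢 ≤ #𝒯 := card_le_card h𝒢𝒯
    omega

lemma inter_eq_singleton_iff_disjoint_erase {F G : Finset α} {x : α} (hF : x ∈ F) (hG : x ∈ G) :
    G ∩ F = {x} ↔ Disjoint (G.erase x) (F.erase x) := by
  rw [disjoint_iff_inter_eq_empty, erase_inter, inter_erase, erase_idem, erase_eq_empty_iff,
    or_iff_right (ne_empty_of_mem (mem_inter.2 ⟨hG, hF⟩))]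

lemma card_memberSubfamily (𝒻 : Finset (Finset α)) (x : α) :
    #(𝒻.memberSubfamily x) = #{F ∈ 𝒻 | x ∈ F} :=
  card_image_of_injOn fun _ hF _ hG => erase_injOn' x (mem_filter.1 hF).2 (mem_filter.1 hG).2

lemma card_singleton_witness_le (𝒻 : Finset (Finset α)) (x : α) :
    #{F ∈ 𝒻 | x ∈ F ∧ ∀ G ∈ 𝒻, G ∩ F ≠ {x}} ≤ #(transversalMembers (𝒻.memberSubfamily x)) := by
  refine card_le_card_of_injOn (erase · x) (fun F hF => ?_) fun F hF G hG =>
    erase_injOn' x (mem_filter.1 hF).2.1 (mem_filter.1 hG).2.1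
  obtain ⟨hF, hxF, hwitness⟩ := mem_filter.1 hF
  have hlink : ∀ G ∈ 𝒻, x ∈ G → G.erase x ∈ 𝒻.memberSubfamily x := fun G hG hxG =>
    mem_image_of_mem _ (mem_filter.2 ⟨hG, hxG⟩)
  refine mem_filter.2 ⟨hlink F hF hxF, fun E hE => ?_⟩
  obtain ⟨G, hG, rfl⟩ := mem_image.1 hE
  obtain ⟨hG, hxG⟩ := mem_filter.1 hG
  exact (inter_eq_singleton_iff_disjoint_erase hxF hxG).not.1 (hwitness G hG)

theorem stmt_9_general {𝒻 : Finset (Finset α)} {V : Finset α} {x : α} (hV : 5 ≤ #V)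
    (hsub : ∀ F ∈ 𝒻, F ⊆ V) (hcard : ∀ F ∈ 𝒻, #F = 3) (hx : x ∈ V)
    (hdeg : #V - 1 ≤ #{F ∈ 𝒻 | x ∈ F}) :
    #{F ∈ 𝒻 | x ∈ F ∧ ∀ G ∈ 𝒻, G ∩ F ≠ {x}} ≤ 2 := by
  rw [← card_memberSubfamily] at hdeg
  refine (card_singleton_witness_le 𝒻 x).trans
    (card_transversalMembers_le_two (V := V.erase x) ?_ ?_ ?_ (by omega))
  · intro E hE
    obtain ⟨hEx, hxE⟩ := mem_memberSubfamily.1 hE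
    exact subset_erase.2 ⟨(subset_insert x E).trans (hsub _ hEx), hxE⟩
  · intro E hE
    obtain ⟨hEx, hxE⟩ := mem_memberSubfamily.1 hE
    simpa [card_insert_of_notMem hxE] using hcard _ hEx
  · rwa [card_erase_of_mem hx]

end SetFamilies

/-- If `x` lies in at least `n - 1` members of `𝒻`, then at most two members of `𝒻`
admit the singleton `{x}` as a witness. -/
theorem stmt_9 (n : ℕ) (hn : 8 ≤ n) (𝒻 : Finset (Finset ℕ))
    (hsub : ∀ F ∈ 𝒻, F ⊆ Finset.Icc 1 n) (hcard : ∀ F ∈ 𝒻, F.card = 3)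
    (x : ℕ) (hx : x ∈ Finset.Icc 1 n)
    (hdeg : n - 1 ≤ (𝒻.filter (fun F => x ∈ F)).card) :
    (𝒻.filter (fun F => x ∈ F ∧ ∀ G ∈ 𝒻, G ∩ F ≠ ({x} : Finset ℕ))).card ≤ 2 :=
  stmt_9_general (by rw [Nat.card_Icc]; omega) hsub hcard hx (by rwa [Nat.card_Icc])
end

section
/- Let n ≥ 8 and let 𝒻 be a family of 3-element subsets of [n] such that |𝒻(v)| ≥ n − 1 for every v ∈ [n]. Suppose {x, y, z} ∈ 𝒻 intersects every member of 𝒻. Then for every v ∈ [n] \ {x, y, z}, at most one of the pairs {v, x}, {v, y}, {v, z} is a witness of some member of 𝒻 (i.e., for at least two of these pairs P, there is no F ∈ 𝒻 with P ⊆ F and G ∩ F ≠ P for all G ∈ 𝒻). -/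
/-- The pair `P` is a witness of some member of `𝒻`. -/
def IsWitnessPair (𝒻 : Finset (Finset ℕ)) (P : Finset ℕ) : Prop :=
  ∃ F ∈ 𝒻, P ⊆ F ∧ ∀ G ∈ 𝒻, G ∩ F ≠ P

/-!
Let all members of a family on `S` have size `|C| + 2`, let `T` be a transversal disjoint from `C`,
and suppose that `insert t C` is a witness for every `t ∈ T` other than `c`. A witness one element
short of full size lies in exactly one member, so a member `F ⊇ C` is determined by one element
`w ∉ insert c C`: take `w ∈ F ∩ T` if `F` meets `T` outside `c`; otherwise `F` contains `c`, and `w`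
is the last remaining element of `F`. Hence at most `|S| - |C| - 1` members contain `C`. For
triples on `[n]` and `C = {v}`, this bounds the degree of `v` by `n - 2`, so `c` cannot be the only
non-witness.
-/

section

open Finset

variable {α : Type*} [DecidableEq α] {𝒜 : Finset (Finset α)} {B C F G S T : Finset α} {c : α}

/-- `B` is a witness of some member of `𝒜`: the notion `IsWitnessPair` over an arbitrary type.
Such a `B` is automatically a proper subset of the member `F`, because `F ∩ F = F`. -/
def IsWitness (𝒜 : Finset (Finset α)) (B : Finset α) : Prop :=
  ∃ F ∈ 𝒜, B ⊆ F ∧ ∀ G ∈ 𝒜, G ∩ F ≠ B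

theorem IsWitness.eq_of_subset (hB : IsWitness 𝒜 B)
    (h𝒜 : (𝒜 : Set (Finset α)).Sized (#B + 1)) (hF : F ∈ 𝒜) (hG : G ∈ 𝒜)
    (hBF : B ⊆ F) (hBG : B ⊆ G) : F = G := by
  obtain ⟨H, hH, hBH, hne⟩ := hB
  have eq_witnessed {K : Finset α} (hK : K ∈ 𝒜) (hBK : B ⊆ K) : K = H := by
    have hlt : #B < #(K ∩ H) :=
      card_lt_card ((subset_inter hBK hBH).ssubset_of_ne (hne K hK).symm)
    have hinter : K ∩ H = K :=
      eq_of_subset_of_card_le inter_subset_left ((h𝒜 hK).trans_le hlt)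
    exact eq_of_subset_of_card_le (inter_eq_left.1 hinter) ((h𝒜 hH).trans (h𝒜 hK).symm).le
  rw [eq_witnessed hF hBF, eq_witnessed hG hBG]

theorem exists_mem_sdiff_insert_of_inter_nonempty (hF : #C + 1 < #F) (hCT : Disjoint C T)
    (hTF : (T ∩ F).Nonempty) : ∃ w ∈ F \ insert c C, w ∉ T → c ∈ F := by
  obtain ⟨t, ht⟩ := hTF
  obtain ⟨htT, htF⟩ := mem_inter.1 ht
  by_cases htc : t = c
  · obtain ⟨w, hwF, hw⟩ := exists_mem_notMem_of_card_lt_card ((card_insert_le c C).trans_lt hF)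
    exact ⟨w, mem_sdiff.2 ⟨hwF, hw⟩, fun _ => htc ▸ htF⟩
  · have htC : t ∉ C := disjoint_right.1 hCT htT
    exact ⟨t, by simp [htF, htc, htC], fun h => absurd htT h⟩

theorem eq_of_mem_of_forall_isWitness_insert (h𝒜 : (𝒜 : Set (Finset α)).Sized (#C + 2))
    (hwit : ∀ t ∈ T, t ≠ c → IsWitness 𝒜 (insert t C)) (hcC : c ∉ C) {w : α}
    (hw : w ∉ insert c C) (hF : F ∈ 𝒜) (hG : G ∈ 𝒜) (hCF : C ⊆ F) (hCG : C ⊆ G)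
    (hwF : w ∈ F) (hwG : w ∈ G) (hcF : w ∉ T → c ∈ F) (hcG : w ∉ T → c ∈ G) : F = G := by
  obtain ⟨hwc, hwC⟩ : w ≠ c ∧ w ∉ C := by simpa using hw
  by_cases hwT : w ∈ T
  · exact (hwit w hwT hwc).eq_of_subset (by rwa [card_insert_of_notMem hwC]) hF hG
      (insert_subset hwF hCF) (insert_subset hwG hCG)
  · have eq_insert {K : Finset α} (hK : K ∈ 𝒜) (hCK : C ⊆ K) (hwK : w ∈ K) (hcK : c ∈ K) :
        insert w (insert c C) = K :=
      eq_of_subset_of_card_le (insert_subset hwK (insert_subset hcK hCK)) <| by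
        rw [h𝒜 hK, card_insert_of_notMem hw, card_insert_of_notMem hcC]
    rw [← eq_insert hF hCF hwF (hcF hwT), ← eq_insert hG hCG hwG (hcG hwT)]

theorem card_filter_subset_add_card_lt_of_forall_isWitness_insert
    (hS : ∀ F ∈ 𝒜, F ⊆ S) (h𝒜 : (𝒜 : Set (Finset α)).Sized (#C + 2)) (hCS : C ⊆ S)
    (hcS : c ∈ S) (hcC : c ∉ C) (hCT : Disjoint C T) (htrans : ∀ F ∈ 𝒜, (T ∩ F).Nonempty)
    (hwit : ∀ t ∈ T, t ≠ c → IsWitness 𝒜 (insert t C)) :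
    #{F ∈ 𝒜 | C ⊆ F} + #C < #S := by
  have hle : #{F ∈ 𝒜 | C ⊆ F} ≤ #(S \ insert c C) := by
    refine card_le_card_of_forall_subsingleton (fun F w => w ∈ F ∧ (w ∉ T → c ∈ F)) ?_ ?_
    · intro F hF
      have hF𝒜 : F ∈ 𝒜 := (mem_filter.1 hF).1
      obtain ⟨w, hw, hwT⟩ := exists_mem_sdiff_insert_of_inter_nonempty (c := c)
        (by rw [h𝒜 hF𝒜]; omega) hCT (htrans F hF𝒜)
      exact ⟨w, sdiff_subset_sdiff (hS F hF𝒜) subset_rfl hw, (mem_sdiff.1 hw).1, hwT⟩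
    · rintro w hw F ⟨hF, hwF, hcF⟩ G ⟨hG, hwG, hcG⟩
      obtain ⟨hF𝒜, hCF⟩ := mem_filter.1 hF
      obtain ⟨hG𝒜, hCG⟩ := mem_filter.1 hG
      exact eq_of_mem_of_forall_isWitness_insert h𝒜 hwit hcC (mem_sdiff.1 hw).2
        hF𝒜 hG𝒜 hCF hCG hwF hwG hcF hcG
  have hcard := card_sdiff_add_card_eq_card (insert_subset hcS hCS)
  rw [card_insert_of_notMem hcC] at hcard
  omega

theorem nontrivial_setOf_not_isWitness_insert (hS : ∀ F ∈ 𝒜, F ⊆ S)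
    (h𝒜 : (𝒜 : Set (Finset α)).Sized (#C + 2)) (hCS : C ⊆ S) (hdeg : #S ≤ #{F ∈ 𝒜 | C ⊆ F} + #C)
    (hTS : T ⊆ S) (hT : T.Nonempty) (hCT : Disjoint C T) (htrans : ∀ F ∈ 𝒜, (T ∩ F).Nonempty) :
    {t | t ∈ T ∧ ¬ IsWitness 𝒜 (insert t C)}.Nontrivial := by
  have exists_ne {c : α} (hc : c ∈ T) : ∃ t ∈ T, t ≠ c ∧ ¬ IsWitness 𝒜 (insert t C) := by
    by_contra! hwit
    exact hdeg.not_gt <| card_filter_subset_add_card_lt_of_forall_isWitness_insert hS h𝒜 hCS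
      (hTS hc) (disjoint_right.1 hCT hc) hCT htrans hwit
  obtain ⟨c, hc⟩ := hT
  obtain ⟨s, hs, -, hsw⟩ := exists_ne hc
  obtain ⟨t, ht, hts, htw⟩ := exists_ne hs
  exact ⟨s, ⟨hs, hsw⟩, t, ⟨ht, htw⟩, hts.symm⟩

theorem stmt_13_general {v x y z : α} (hS : ∀ F ∈ 𝒜, F ⊆ S)
    (h𝒜 : (𝒜 : Set (Finset α)).Sized 3) (hT : {x, y, z} ⊆ S)
    (htrans : ∀ F ∈ 𝒜, ({x, y, z} ∩ F).Nonempty) (hv : v ∈ S \ {x, y, z})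
    (hdeg : #S ≤ #{F ∈ 𝒜 | v ∈ F} + 1) :
    ¬ (IsWitness 𝒜 {v, x} ∧ IsWitness 𝒜 {v, y}) ∧
    ¬ (IsWitness 𝒜 {v, x} ∧ IsWitness 𝒜 {v, z}) ∧
    ¬ (IsWitness 𝒜 {v, y} ∧ IsWitness 𝒜 {v, z}) := by
  obtain ⟨hvS, hvT⟩ := mem_sdiff.1 hv
  obtain ⟨s, ⟨hs, hsw⟩, t, ⟨ht, htw⟩, hst⟩ :=
    nontrivial_setOf_not_isWitness_insert (C := {v}) hS h𝒜 (singleton_subset_iff.2 hvS)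
      (by simpa only [singleton_subset_iff, card_singleton] using hdeg) hT
      (insert_nonempty x {y, z}) (disjoint_singleton_left.2 hvT) htrans
  rw [pair_comm] at hsw htw
  simp only [mem_insert, mem_singleton] at hs ht
  grind only

end

/-- Suppose every element of `[n]` has degree at least `n - 1` in `𝒻` and
`{x, y, z} ∈ 𝒻` intersects every member of `𝒻`.  Then for every
`v ∈ [n] \ {x, y, z}`, at most one of the pairs `{v,x}`, `{v,y}`, `{v,z}` is the
witness of some member of `𝒻`. -/
theorem stmt_13 (n : ℕ) (hn : 8 ≤ n) (𝒻 : Finset (Finset ℕ))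
    (hsub : ∀ F ∈ 𝒻, F ⊆ Finset.Icc 1 n) (hcard : ∀ F ∈ 𝒻, F.card = 3)
    (hdeg : ∀ v ∈ Finset.Icc 1 n, n - 1 ≤ (𝒻.filter (fun F => v ∈ F)).card)
    (x y z : ℕ) (hxyz : ({x, y, z} : Finset ℕ) ∈ 𝒻)
    (htrans : ∀ F ∈ 𝒻, (({x, y, z} : Finset ℕ) ∩ F).Nonempty) :
    ∀ v ∈ Finset.Icc 1 n \ ({x, y, z} : Finset ℕ),
      ¬ (IsWitnessPair 𝒻 {v, x} ∧ IsWitnessPair 𝒻 {v, y}) ∧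
      ¬ (IsWitnessPair 𝒻 {v, x} ∧ IsWitnessPair 𝒻 {v, z}) ∧
      ¬ (IsWitnessPair 𝒻 {v, y} ∧ IsWitnessPair 𝒻 {v, z}) := by
  intro v hv
  exact stmt_13_general hsub hcard (hsub _ hxyz) htrans hv <| by
    simpa using hdeg v (Finset.mem_sdiff.1 hv).1
end

section
/- Let n ≥ 8 and let 𝒻 be a family of 3-element subsets of [n] such that |𝒻(v)| ≥ n − 1 for every v ∈ [n]. Suppose {x, y, z} ∈ 𝒻 intersects every member of 𝒻. Then it is impossible that for every u ∈ {x, y, z} there exists F_u ∈ 𝒻 with u ∈ F_u such that G ∩ F_u ≠ {u} for every G ∈ 𝒻; that is, at most two of the elements x, y, z can serve as singleton witnesses of members of 𝒻. -/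
/-!
Let `T` be a transversal of a 3-uniform family `𝒻` with `T ∈ 𝒻`, and let `{u}` be a witness of
`F u ∈ 𝒻` for each `u ∈ T`. Since `T ∩ F u ≠ {u}`, at most one point of `F u` lies outside `T`, and
a member of `𝒻` meeting `T` only in `u` has to contain that point. Hence, for a point `a` outside
`T` and all the sets `F u`, a member of `𝒻` containing `a` is `a` together with either a pair from
`T` or one of the pairs `insert u (F u \ T)`. This leaves at most `3 + 3` members, while `T` and the
sets `F u` cover at most `3 + 3` points, so that some point of a larger ground set has degree at
most `6`.
-/

section Transversal

open Finset

variable {α : Type*} [DecidableEq α] {𝒻 : Finset (Finset α)} {T F G : Finset α} {a u : α}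

/-- `{u}` is a witness of `F` in `𝒻`. When `F ∈ 𝒻`, taking `G = F` shows that the inclusion
`{u} ⊆ F` recorded by the first conjunct is proper. -/
def IsSingletonWitness (𝒻 : Finset (Finset α)) (F : Finset α) (u : α) : Prop :=
  u ∈ F ∧ ∀ G ∈ 𝒻, G ∩ F ≠ {u}

namespace IsSingletonWitness

theorem card_sdiff_add_two_le (hF : IsSingletonWitness 𝒻 F u) (hT : T ∈ 𝒻) (huT : u ∈ T) :
    #(F \ T) + 2 ≤ #F := by
  have hnontrivial : (T ∩ F).Nontrivial :=
    (nontrivial_iff_ne_singleton (mem_inter.2 ⟨huT, hF.1⟩)).2 (hF.2 T hT)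
  have htwo : 2 ≤ #(F ∩ T) := inter_comm T F ▸ one_lt_card_iff_nontrivial.2 hnontrivial
  have hsplit := card_sdiff_add_card_inter F T
  omega

theorem inter_sdiff_nonempty (hF : IsSingletonWitness 𝒻 F u) (hG : G ∈ 𝒻) (hTG : T ∩ G = {u}) :
    (G ∩ (F \ T)).Nonempty := by
  have huG : u ∈ G := (mem_inter.1 (hTG ▸ mem_singleton_self u)).2
  obtain ⟨v, hv, hvu⟩ :=
    ((nontrivial_iff_ne_singleton (mem_inter.2 ⟨huG, hF.1⟩)).2 (hF.2 G hG)).exists_ne u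
  obtain ⟨hvG, hvF⟩ := mem_inter.1 hv
  have hvT : v ∉ T := fun hvT ↦ hvu (mem_singleton.1 (hTG ▸ mem_inter.2 ⟨hvT, hvG⟩))
  exact ⟨v, mem_inter.2 ⟨hvG, mem_sdiff.2 ⟨hvF, hvT⟩⟩⟩

end IsSingletonWitness

theorem subset_or_exists_inter_eq_singleton_of_card_le_two {L : Finset α} (hL : #L ≤ 2)
    (hTL : (T ∩ L).Nonempty) : L ⊆ T ∨ ∃ u ∈ T, T ∩ L = {u} := by
  obtain ⟨u, hu⟩ := hTL
  by_cases hsingle : T ∩ L = {u}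
  · exact Or.inr ⟨u, (mem_inter.1 hu).1, hsingle⟩
  · have htwo : 1 < #(T ∩ L) :=
      one_lt_card_iff_nontrivial.2 ((nontrivial_iff_ne_singleton hu).2 hsingle)
    have hinter : T ∩ L = L := eq_of_subset_of_card_le inter_subset_right (by omega)
    exact Or.inl (inter_eq_right.1 hinter)

theorem eq_insert_of_card_le_two {L P : Finset α} (hL : #L ≤ 2) (huL : u ∈ L) (huP : u ∉ P)
    (hP : #P ≤ 1) (hLP : (L ∩ P).Nonempty) : L = insert u P := by
  obtain ⟨p, hp⟩ := hLP
  obtain ⟨hpL, hpP⟩ := mem_inter.1 hp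
  have hPp : P = {p} := eq_singleton_iff_unique_mem.2
    ⟨hpP, fun q hq ↦ card_le_one.1 hP q hq p hpP⟩
  have hup : u ≠ p := fun h ↦ huP (h ▸ hpP)
  rw [hPp]
  refine (eq_of_subset_of_card_le ?_ ?_).symm
  · exact insert_subset huL (singleton_subset_iff.2 hpL)
  · rwa [card_pair hup]

theorem card_filter_mem_eq_card_memberSubfamily (𝒻 : Finset (Finset α)) (a : α) :
    #{G ∈ 𝒻 | a ∈ G} = #(𝒻.memberSubfamily a) :=
  (card_image_of_injOn ((erase_injOn' a).mono fun _ hG ↦ (mem_filter.1 hG).2)).symm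

theorem memberSubfamily_subset_of_isSingletonWitness {F : α → Finset α}
    (h𝒻 : (𝒻 : Set (Finset α)).Sized 3) (htrans : ∀ G ∈ 𝒻, (T ∩ G).Nonempty)
    (hwit : ∀ u ∈ T, IsSingletonWitness 𝒻 (F u) u) (hout : ∀ u ∈ T, #(F u \ T) ≤ 1)
    (haT : a ∉ T) (haF : ∀ u ∈ T, a ∉ F u) :
    𝒻.memberSubfamily a ⊆ powersetCard 2 T ∪ T.image fun u ↦ insert u (F u \ T) := by
  intro L hL
  obtain ⟨haL𝒻, haL⟩ := mem_memberSubfamily.1 hL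
  have hLcard : #L = 2 := by
    have hcard := h𝒻 haL𝒻
    rw [card_insert_of_notMem haL] at hcard
    omega
  have hTL : (T ∩ L).Nonempty := inter_insert_of_notMem haT ▸ htrans _ haL𝒻
  rcases subset_or_exists_inter_eq_singleton_of_card_le_two hLcard.le hTL with hLT | ⟨u, huT, hu⟩
  · exact mem_union_left _ (mem_powersetCard.2 ⟨hLT, hLcard⟩)
  · have huL : u ∈ L := (mem_inter.1 (hu ▸ mem_singleton_self u)).2
    have huout : u ∉ F u \ T := fun h ↦ (mem_sdiff.1 h).2 huT
    have haout : a ∉ F u \ T := fun h ↦ haF u huT (mem_sdiff.1 h).1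
    have hmeet : (L ∩ (F u \ T)).Nonempty := insert_inter_of_notMem haout ▸
      (hwit u huT).inter_sdiff_nonempty haL𝒻 ((inter_insert_of_notMem haT).trans hu)
    have hpair := eq_insert_of_card_le_two hLcard.le huL huout (hout u huT) hmeet
    exact mem_union_right _ (mem_image.2 ⟨u, huT, hpair.symm⟩)

theorem card_filter_mem_le_of_isSingletonWitness {F : α → Finset α}
    (h𝒻 : (𝒻 : Set (Finset α)).Sized 3) (htrans : ∀ G ∈ 𝒻, (T ∩ G).Nonempty)
    (hwit : ∀ u ∈ T, IsSingletonWitness 𝒻 (F u) u) (hout : ∀ u ∈ T, #(F u \ T) ≤ 1)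
    (haT : a ∉ T) (haF : ∀ u ∈ T, a ∉ F u) :
    #{G ∈ 𝒻 | a ∈ G} ≤ (#T).choose 2 + #T :=
  calc
    #{G ∈ 𝒻 | a ∈ G} = #(𝒻.memberSubfamily a) := card_filter_mem_eq_card_memberSubfamily 𝒻 a
    _ ≤ #(powersetCard 2 T ∪ T.image fun u ↦ insert u (F u \ T)) := card_le_card <|
      memberSubfamily_subset_of_isSingletonWitness h𝒻 htrans hwit hout haT haF
    _ ≤ #(powersetCard 2 T) + #(T.image fun u ↦ insert u (F u \ T)) := card_union_le _ _
    _ ≤ (#T).choose 2 + #T := Nat.add_le_add (card_powersetCard 2 T).le card_image_le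

theorem card_union_biUnion_le_two_mul {F : α → Finset α} (hout : ∀ u ∈ T, #(F u \ T) ≤ 1) :
    #(T ∪ T.biUnion F) ≤ 2 * #T :=
  calc
    #(T ∪ T.biUnion F) = #(T ∪ T.biUnion fun u ↦ F u \ T) := by
      congr 1
      ext
      simp only [mem_union, mem_biUnion, mem_sdiff]
      grind
    _ ≤ #T + #(T.biUnion fun u ↦ F u \ T) := card_union_le _ _
    _ ≤ #T + #T * 1 := Nat.add_le_add_left (card_biUnion_le_card_mul _ _ 1 hout) _
    _ = 2 * #T := by ring

theorem exists_card_filter_mem_le_of_isSingletonWitness {F : α → Finset α} {V : Finset α}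
    (h𝒻 : (𝒻 : Set (Finset α)).Sized 3) (htrans : ∀ G ∈ 𝒻, (T ∩ G).Nonempty)
    (hwit : ∀ u ∈ T, IsSingletonWitness 𝒻 (F u) u) (hout : ∀ u ∈ T, #(F u \ T) ≤ 1)
    (hV : 2 * #T < #V) :
    ∃ a ∈ V, #{G ∈ 𝒻 | a ∈ G} ≤ (#T).choose 2 + #T := by
  obtain ⟨a, haV, ha⟩ := exists_mem_notMem_of_card_lt_card
    ((card_union_biUnion_le_two_mul hout).trans_lt hV)
  rw [notMem_union] at ha
  have haF : ∀ u ∈ T, a ∉ F u := fun u hu hau ↦ ha.2 (mem_biUnion.2 ⟨u, hu, hau⟩)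
  exact ⟨a, haV, card_filter_mem_le_of_isSingletonWitness h𝒻 htrans hwit hout ha.1 haF⟩

theorem stmt_14_general {V : Finset α} (hV : 7 ≤ #V) (h𝒻 : (𝒻 : Set (Finset α)).Sized 3)
    (hdeg : ∀ v ∈ V, 7 ≤ #{F ∈ 𝒻 | v ∈ F}) (hT : T ∈ 𝒻) (htrans : ∀ F ∈ 𝒻, (T ∩ F).Nonempty) :
    ¬ ∀ u ∈ T, ∃ F ∈ 𝒻, IsSingletonWitness 𝒻 F u := by
  intro h
  choose! F hF hwit using h
  have hTcard : #T = 3 := h𝒻 hT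
  have hout : ∀ u ∈ T, #(F u \ T) ≤ 1 := by
    intro u hu
    have hle := (hwit u hu).card_sdiff_add_two_le hT hu
    rw [h𝒻 (hF u hu)] at hle
    omega
  obtain ⟨a, haV, ha⟩ :=
    exists_card_filter_mem_le_of_isSingletonWitness h𝒻 htrans hwit hout (V := V) (by omega)
  have hsix : (#T).choose 2 + #T = 6 := by rw [hTcard]; rfl
  have hseven := hdeg a haV
  omega

end Transversal

/-- Suppose every element of `[n]` has degree at least `n - 1` in `𝒻` and
`{x, y, z} ∈ 𝒻` intersects every member of `𝒻`.  Then it is impossible that all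
three of `x`, `y`, `z` serve as singleton witnesses of members of `𝒻`. -/
theorem stmt_14 (n : ℕ) (hn : 8 ≤ n) (𝒻 : Finset (Finset ℕ))
    (hsub : ∀ F ∈ 𝒻, F ⊆ Finset.Icc 1 n) (hcard : ∀ F ∈ 𝒻, F.card = 3)
    (hdeg : ∀ v ∈ Finset.Icc 1 n, n - 1 ≤ (𝒻.filter (fun F => v ∈ F)).card)
    (x y z : ℕ) (hxyz : ({x, y, z} : Finset ℕ) ∈ 𝒻)
    (htrans : ∀ F ∈ 𝒻, (({x, y, z} : Finset ℕ) ∩ F).Nonempty) :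
    ¬ (∀ u ∈ ({x, y, z} : Finset ℕ),
        ∃ F ∈ 𝒻, u ∈ F ∧ ∀ G ∈ 𝒻, G ∩ F ≠ ({u} : Finset ℕ)) :=
  stmt_14_general (V := Finset.Icc 1 n) (by rw [Nat.card_Icc]; omega) hcard
    (fun v hv ↦ le_trans (by omega) (hdeg v hv)) hxyz htrans
end

section
/- Let n ≥ 8 and let 𝒻 be a family of 3-element subsets of [n] such that |𝒻(v)| ≥ n − 1 for every v ∈ [n]. Define 𝒞 := {F ∈ 𝒻 : F intersects every member of 𝒻, and for every nonempty proper subset B ⊊ F there exists G ∈ 𝒻 with G ∩ F = B}. If |𝒞| ≥ 4, then 𝒞 is not 2-intersecting; that is, there exist A, B ∈ 𝒞 with |A ∩ B| ≤ 1. -/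
/-!
Sets of size `k + 1` that pairwise share `k` points either all contain a common `k`-set or all lie
in a common `(k + 2)`-set. Suppose that `𝒞` is 2-intersecting and apply this with `k = 2`.

If all members of `𝒞` contain the pair `A ∩ B`, a member `G` of `𝒻` that meets `A` only in the point
of `A \ B` avoids this pair. As `G` meets every member of `𝒞`, each of them is the pair together
with a point of `G`, so `|𝒞| ≤ 3`.

If all members of `𝒞` lie in the 4-set `U = A ∪ B`, then `|𝒞| ≥ 4` makes every triple in `U` a
member of `𝒞`, so every member of `𝒻` has at least two points in `U`. A point outside `U` is thus in
at most `(4 choose 2) = 6` members of `𝒻`, one for each pair in `U`.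
-/

open Finset

section

variable {α : Type*} [DecidableEq α] {k r : ℕ} {A B E G P U : Finset α} {v : α}
  {𝒻 𝒞 : Finset (Finset α)}

lemma inter_subset_or_subset_union (hAB : #(A ∩ B) ≤ k) (hE : #E ≤ k + 1)
    (hAE : k ≤ #(A ∩ E)) (hBE : k ≤ #(B ∩ E)) : A ∩ B ⊆ E ∨ E ⊆ A ∪ B := by
  by_contra! ⟨hinter, hunion⟩
  have hinter_lt : #(A ∩ B ∩ E) < #(A ∩ B) :=
    card_lt_card (inter_subset_left.ssubset_of_ne (inter_eq_left.not.2 hinter))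
  have hunion_lt : #((A ∪ B) ∩ E) < #E :=
    card_lt_card (inter_subset_right.ssubset_of_ne (inter_eq_right.not.2 hunion))
  have hsum : #((A ∪ B) ∩ E) + #(A ∩ B ∩ E) = #(A ∩ E) + #(B ∩ E) := by
    rw [union_inter_distrib_right, inter_inter_distrib_right, card_union_add_card_inter]
  lia

lemma forall_inter_subset_or_forall_subset_union (hcard : ∀ F ∈ 𝒞, #F = k + 1)
    (hinter : ∀ F ∈ 𝒞, ∀ F' ∈ 𝒞, k ≤ #(F ∩ F')) (hA : A ∈ 𝒞) (hB : B ∈ 𝒞)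
    (hAB : #(A ∩ B) ≤ k) : (∀ F ∈ 𝒞, A ∩ B ⊆ F) ∨ ∀ F ∈ 𝒞, F ⊆ A ∪ B := by
  have hor (F) (hF : F ∈ 𝒞) : A ∩ B ⊆ F ∨ F ⊆ A ∪ B :=
    inter_subset_or_subset_union hAB (hcard F hF).le (hinter A hA F hF) (hinter B hB F hF)
  by_contra! ⟨⟨D, hD, hABD⟩, E, hE, hEAB⟩
  have hDU : D ⊆ A ∪ B := (hor D hD).resolve_left hABD
  have hABE : A ∩ B ⊆ E := (hor E hE).resolve_right hEAB
  have hcard_inter : #(A ∩ B) = k := hAB.antisymm (hinter A hA B hB)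
  have hEU : E ∩ (A ∪ B) = A ∩ B := by
    refine (eq_of_subset_of_card_le (subset_inter hABE inter_subset_union) ?_).symm
    have : #(E ∩ (A ∪ B)) < #E :=
      card_lt_card (inter_subset_left.ssubset_of_ne (inter_eq_left.not.2 hEAB))
    have := hcard E hE
    lia
  have hED : E ∩ D ⊆ A ∩ B := hEU ▸ inter_subset_inter_left hDU
  have hED_eq : E ∩ D = A ∩ B :=
    eq_of_subset_of_card_le hED (hcard_inter.trans_le (hinter E hE D hD))
  exact hABD (hED_eq ▸ inter_subset_right)

lemma card_inter_eq_of_ne (hA : #A = k + 1) (hB : #B = k + 1) (hne : A ≠ B)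
    (hAB : k ≤ #(A ∩ B)) : #(A ∩ B) = k := by
  have : #(A ∩ B) < #A := card_lt_card <| inter_subset_left.ssubset_of_ne fun h ↦
    hne (eq_of_subset_of_card_le (inter_eq_left.1 h) (hB.trans hA.symm).le)
  lia

lemma card_le_card_of_forall_subset_of_disjoint (hPG : Disjoint P G)
    (hcard : ∀ F ∈ 𝒞, #F = #P + 1) (hsub : ∀ F ∈ 𝒞, P ⊆ F)
    (hmeet : ∀ F ∈ 𝒞, (F ∩ G).Nonempty) : #𝒞 ≤ #G := by
  have himage : 𝒞 ⊆ G.image (insert · P) := fun F hF ↦ by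
    obtain ⟨x, hx⟩ := hmeet F hF
    obtain ⟨hxF, hxG⟩ := mem_inter.1 hx
    have hxP : x ∉ P := disjoint_right.1 hPG hxG
    refine mem_image.2 ⟨x, hxG, eq_of_subset_of_card_le (insert_subset hxF (hsub F hF)) ?_⟩
    rw [card_insert_of_notMem hxP, hcard F hF]
  exact (card_le_card himage).trans card_image_le

lemma le_card_inter_of_forall_powersetCard_inter_nonempty (hr : k + r ≤ #U + 1)
    (hmeet : ∀ T ∈ U.powersetCard r, (T ∩ G).Nonempty) : k ≤ #(U ∩ G) := by
  have hsdiff : #(U \ G) < r := by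
    by_contra! hle
    obtain ⟨T, hT, hTr⟩ := exists_subset_card_eq hle
    have hTU : T ∈ U.powersetCard r := mem_powersetCard.2 ⟨hT.trans sdiff_subset, hTr⟩
    have hTG : Disjoint T G := disjoint_of_subset_left hT sdiff_disjoint
    exact not_disjoint_iff_nonempty_inter.2 (hmeet T hTU) hTG
  have := card_sdiff_add_card_inter U G
  lia

lemma card_filter_mem_le_choose (hv : v ∉ U) (hcard : ∀ F ∈ 𝒻, #F ≤ k + 1)
    (hinter : ∀ F ∈ 𝒻, k ≤ #(U ∩ F)) : #{F ∈ 𝒻 | v ∈ F} ≤ (#U).choose k := by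
  rw [← card_powersetCard]
  refine card_le_card_of_injOn (erase · v) (fun F hF ↦ ?_)
    ((erase_injOn' v).mono fun F hF ↦ (mem_filter.1 hF).2)
  obtain ⟨hF, hvF⟩ := mem_filter.1 hF
  have hsub : U ∩ F ⊆ F.erase v :=
    subset_erase.2 ⟨inter_subset_right, fun h ↦ hv (mem_inter.1 h).1⟩
  have hcard_erase : #(F.erase v) ≤ k := by
    rw [card_erase_of_mem hvF]
    exact Nat.sub_le_of_le_add (hcard F hF)
  have heq : U ∩ F = F.erase v :=
    eq_of_subset_of_card_le hsub (hcard_erase.trans (hinter F hF))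
  exact mem_powersetCard.2
    ⟨heq.ge.trans inter_subset_left, hcard_erase.antisymm (heq ▸ hinter F hF)⟩

lemma card_le_of_forall_inter_subset (hAB : ¬ A ⊆ B)
    (hcard : ∀ F ∈ 𝒻, #F ≤ k) (hcard𝒞 : ∀ F ∈ 𝒞, #F = #(A ∩ B) + 1)
    (hmeet : ∀ F ∈ 𝒞, ∀ G ∈ 𝒻, (F ∩ G).Nonempty)
    (hsingle : ∀ x ∈ A, ∃ G ∈ 𝒻, G ∩ A = {x}) (hsub : ∀ F ∈ 𝒞, A ∩ B ⊆ F) : #𝒞 ≤ k := by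
  obtain ⟨x, hxA, hxB⟩ := not_subset.1 hAB
  obtain ⟨G, hG, hGA⟩ := hsingle x hxA
  have hdisj : Disjoint (A ∩ B) G := by
    rw [disjoint_iff_inter_eq_empty, inter_right_comm, inter_comm A G, hGA,
      singleton_inter_of_notMem hxB]
  exact (card_le_card_of_forall_subset_of_disjoint hdisj hcard𝒞 hsub
    fun F hF ↦ hmeet F hF G hG).trans (hcard G hG)

lemma card_filter_mem_le_choose_of_forall_subset (hr : k + r ≤ #U + 1) (hv : v ∉ U)
    (hcard : ∀ F ∈ 𝒻, #F ≤ k + 1) (hcard𝒞 : ∀ F ∈ 𝒞, #F = r) (hsub : ∀ F ∈ 𝒞, F ⊆ U)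
    (hbig : (#U).choose r ≤ #𝒞) (hmeet : ∀ F ∈ 𝒞, ∀ G ∈ 𝒻, (F ∩ G).Nonempty) :
    #{F ∈ 𝒻 | v ∈ F} ≤ (#U).choose k := by
  have hall : 𝒞 = U.powersetCard r :=
    eq_of_subset_of_card_le (fun F hF ↦ mem_powersetCard.2 ⟨hsub F hF, hcard𝒞 F hF⟩)
      (by rwa [card_powersetCard])
  exact card_filter_mem_le_choose hv hcard fun G hG ↦
    le_card_inter_of_forall_powersetCard_inter_nonempty hr fun T hT ↦ hmeet T (hall ▸ hT) G hG

theorem stmt_15_general {X : Finset α} (hX : 5 ≤ #X) (hcard : ∀ F ∈ 𝒻, #F = 3)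
    (hdeg : ∀ v ∈ X, 7 ≤ #{F ∈ 𝒻 | v ∈ F}) (h𝒞 : 𝒞 ⊆ 𝒻)
    (hmeet : ∀ F ∈ 𝒞, ∀ G ∈ 𝒻, (F ∩ G).Nonempty)
    (hsingle : ∀ F ∈ 𝒞, ∀ x ∈ F, ∃ G ∈ 𝒻, G ∩ F = {x}) (hbig : 4 ≤ #𝒞) :
    ∃ A ∈ 𝒞, ∃ B ∈ 𝒞, #(A ∩ B) ≤ 1 := by
  by_contra! hinter
  have hcard𝒞 (F) (hF : F ∈ 𝒞) : #F = 3 := hcard F (h𝒞 hF)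
  obtain ⟨A, hA, B, hB, hne⟩ := one_lt_card.1 (show 1 < #𝒞 by lia)
  have hAB : #(A ∩ B) = 2 :=
    card_inter_eq_of_ne (hcard𝒞 A hA) (hcard𝒞 B hB) hne (hinter A hA B hB)
  rcases forall_inter_subset_or_forall_subset_union hcard𝒞 hinter hA hB hAB.le with hstar | hunion
  · have hAsubB : ¬ A ⊆ B := fun h ↦
      hne (eq_of_subset_of_card_le h (by rw [hcard𝒞 A hA, hcard𝒞 B hB]))
    have : #𝒞 ≤ 3 := card_le_of_forall_inter_subset hAsubB (fun F hF ↦ (hcard F hF).le)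
      (hAB ▸ hcard𝒞) hmeet (hsingle A hA) hstar
    lia
  · have hU : #(A ∪ B) = 4 := by
      have := card_union_add_card_inter A B
      have := hcard𝒞 A hA
      have := hcard𝒞 B hB
      lia
    obtain ⟨v, hvX, hvU⟩ := exists_mem_notMem_of_card_lt_card (show #(A ∪ B) < #X by lia)
    have hdeg_le : #{F ∈ 𝒻 | v ∈ F} ≤ Nat.choose 4 2 :=
      hU ▸ card_filter_mem_le_choose_of_forall_subset (by lia) hvU (fun F hF ↦ (hcard F hF).le)
        hcard𝒞 hunion (by rwa [hU]) hmeet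
    rw [show Nat.choose 4 2 = 6 from rfl] at hdeg_le
    have := hdeg v hvX
    lia

end

/-- Suppose every element of `[n]` has degree at least `n - 1` in `𝒻`, and let `𝒞` be
the subfamily of members `F` of `𝒻` that intersect every member of `𝒻` and such that
every nonempty proper subset of `F` is realized as an intersection with some member
of `𝒻`.  If `|𝒞| ≥ 4`, then `𝒞` is not 2-intersecting. -/
theorem stmt_15 (n : ℕ) (hn : 8 ≤ n) (𝒻 : Finset (Finset ℕ))
    (hsub : ∀ F ∈ 𝒻, F ⊆ Finset.Icc 1 n) (hcard : ∀ F ∈ 𝒻, F.card = 3)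
    (hdeg : ∀ v ∈ Finset.Icc 1 n, n - 1 ≤ (𝒻.filter (fun F => v ∈ F)).card)
    (𝒞 : Finset (Finset ℕ))
    (h𝒞 : ∀ F : Finset ℕ, F ∈ 𝒞 ↔ F ∈ 𝒻 ∧
      (∀ G ∈ 𝒻, (F ∩ G).Nonempty) ∧
      (∀ B : Finset ℕ, B ⊂ F → B.Nonempty → ∃ G ∈ 𝒻, G ∩ F = B))
    (hbig : 4 ≤ 𝒞.card) :
    ∃ A ∈ 𝒞, ∃ B ∈ 𝒞, (A ∩ B).card ≤ 1 := by
  have hsingle (F) (hF : F ∈ 𝒞) (x) (hx : x ∈ F) : ∃ G ∈ 𝒻, G ∩ F = {x} := by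
    obtain ⟨hF𝒻, -, hrealized⟩ := (h𝒞 F).1 hF
    refine hrealized {x} ?_ (singleton_nonempty x)
    exact (singleton_subset_iff.2 hx).ssubset_of_ne fun h ↦ by simpa [← h] using hcard F hF𝒻
  exact stmt_15_general (X := Icc 1 n) (by rw [Nat.card_Icc]; lia) hcard
    (fun v hv ↦ le_trans (by lia) (hdeg v hv)) (fun F hF ↦ ((h𝒞 F).1 hF).1)
    (fun F hF ↦ ((h𝒞 F).1 hF).2.1) hsingle hbig
end
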